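/- arXiv:1212.1392 — 2 statements merged into one kernel-verified Lean document; each statement's English description precedes it below -/
import Mathlib

section
/- Let p be a prime with p ≡ 1 (mod 4) and 2^{p−1} ≡ 1 (mod p^2), and let q1 be a prime factor of p − 2 such that q1^{p−1} ≢ 1 (mod p^2). If n1 and n2 are positive composite numbers such that ℚ(√(4q1^2 − p^{n1})) ≠ ℚ(√(−1)), ℚ(√(4q1^2 − p^{n2})) ≠ ℚ(√(−1)), and ℚ(√(4q1^2 − p^{n1})) = ℚ(√(4q1^2 − p^{n2})) (equivalently, the squarefree parts of 4q1^2 − p^{n1} and 4q1^2 − p^{n2} coincide and neither equals −1), then n1 = n2. -/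
/-!
Equality of the fields means `4 * q ^ 2 - p ^ nᵢ = d * bᵢ ^ 2` with a common `d < -1`, so that
`2 * q + bᵢ * √d` is an element of `ℤ√d` of norm `p ^ nᵢ` not divisible by `p`. Up to sign and
conjugation these elements are the powers of one element `α` of minimal norm. If `n₂` is composite
and `n₁ < n₂`, then `2 * q = |re (z ^ ℓ)|` for a prime `ℓ` and a power `z` of `α` of norm
`p ^ (h + 1)`, `h ≥ 1`. As `re z ∣ re (z ^ ℓ)`, either `|re z| = 2` or `|re z| = 2 * q`. Since
`(2 * re z) ^ ℓ ≡ 2 * re (z ^ ℓ)` modulo `p ^ (h + 1)` and `p` is a Wieferich prime to base `2` but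
not to base `q`, the first case is impossible and the second one gives `2 * p ^ h ∣ ℓ - 1`.

Thus `ℓ` is huge, while `|re (z ^ ℓ)| = ‖z‖ ^ ℓ * |cos (ℓ * arg z)|` does not exceed `‖z‖`, so that
`2 * arg z` is extremely close to some `π * j / ℓ`. This contradicts a lower bound for linear forms
in the two logarithms of `z / conj z` and `-1`, proved with Laurent's interpolation determinants.
-/

/-- The conjunction of `P` over the block of the `2 ^ d` numbers `i` with `i / 2 ^ d = a`, evaluated
by bisection so that the recursion depth is `d`. -/
def allInBlock (P : ℕ → Bool) : ℕ → ℕ → Bool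
  | 0, a => P a
  | d + 1, a => allInBlock P d (2 * a) && allInBlock P d (2 * a + 1)

theorem of_allInBlock {P : ℕ → Bool} {d a : ℕ} (h : allInBlock P d a = true) {i : ℕ}
    (hi : i / 2 ^ d = a) : P i = true := by
  induction d generalizing a with
  | zero =>
    obtain rfl : i = a := by simpa using hi
    exact h
  | succ d ih =>
    rw [allInBlock, Bool.and_eq_true] at h
    rw [pow_succ, ← Nat.div_div_eq_div_mul] at hi
    rcases Nat.even_or_odd' (i / 2 ^ d) with ⟨k, hk | hk⟩
    · exact ih h.1 (by omega)
    · exact ih h.2 (by omega)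

/-- The residue of `2 ^ e` modulo `m`, for kernel evaluation: splitting off a factor `128` of the
exponent keeps all intermediate results short, and `Nat.pow` avoids unfolding `Monoid.npow`. -/
def powTwoMod (e m : ℕ) : ℕ :=
  (Nat.pow 2 (e / 128) % m).pow 128 * Nat.pow 2 (e % 128) % m

theorem powTwoMod_eq (e m : ℕ) : powTwoMod e m = 2 ^ e % m := by
  change (2 ^ (e / 128) % m) ^ 128 * 2 ^ (e % 128) % m = _
  rw [Nat.mul_mod, ← Nat.pow_mod, ← Nat.mul_mod, ← pow_mul, ← pow_add, Nat.div_add_mod']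

set_option maxRecDepth 10000 in
theorem allInBlock_powTwoMod_ne_one :
    allInBlock (fun a => a.beq 0 || a.beq 273 ||
      !(powTwoMod (4 * a) (Nat.pow (4 * a + 1) 2)).beq 1) 17 0 = true := by
  decide +kernel

theorem eq_one_or_eq_1093_of_two_pow_modEq {n : ℕ} (hmod : n % 4 = 1) (hlt : n < 2 ^ 19)
    (h : 2 ^ (n - 1) ≡ 1 [MOD n ^ 2]) : n = 1 ∨ n = 1093 := by
  obtain ⟨a, rfl⟩ : ∃ a, n = 4 * a + 1 := ⟨n / 4, by omega⟩
  have hP := of_allInBlock allInBlock_powTwoMod_ne_one (i := a) (Nat.div_eq_of_lt (by omega))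
  simp only [Bool.or_eq_true, Nat.beq_eq, Bool.not_eq_true', ← Bool.not_eq_true] at hP
  rcases hP with (rfl | rfl) | hne
  · exact .inl rfl
  · exact .inr rfl
  · refine .inl (by_contra fun h1 => hne ?_)
    have hone : 1 < (4 * a + 1) ^ 2 := Nat.one_lt_pow two_ne_zero (by omega)
    rw [powTwoMod_eq]
    exact Eq.trans h (Nat.mod_eq_of_lt hone)

/-- The prime `p` is a Wieferich prime to base `a`. -/
def IsWieferich (p : ℕ) (a : ℤ) : Prop := a ^ (p - 1) ≡ 1 [ZMOD p ^ 2]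

theorem isWieferich_natCast {p a : ℕ} : IsWieferich p a ↔ a ^ (p - 1) ≡ 1 [MOD p ^ 2] := by
  rw [IsWieferich, ← Int.natCast_modEq_iff]
  push_cast
  rfl

namespace IsWieferich

variable {p : ℕ} {a b : ℤ}

protected theorem pow (h : IsWieferich p a) (n : ℕ) : IsWieferich p (a ^ n) := by
  rw [IsWieferich, ← pow_mul, mul_comm, pow_mul]
  simpa using Int.ModEq.pow n h

theorem of_mul_left (ha : IsWieferich p a) (hab : IsWieferich p (a * b)) : IsWieferich p b := by
  rw [IsWieferich, mul_pow] at hab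
  simpa only [IsWieferich, one_mul] using (Int.ModEq.mul_right (b ^ (p - 1)) ha).symm.trans hab

theorem of_sq_modEq (hp : Odd p) (ha : IsWieferich p a) (hab : a ^ 2 ≡ b ^ 2 [ZMOD p ^ 2]) :
    IsWieferich p b := by
  obtain ⟨k, rfl⟩ := hp
  unfold IsWieferich at *
  rw [Nat.add_sub_cancel, pow_mul] at *
  exact (hab.pow k).symm.trans ha

end IsWieferich

theorem pow_dvd_of_pow_modEq_one {p h n : ℕ} (hp : p.Prime) (hp2 : p ≠ 2) {a : ℤ}
    (ha : ¬ IsWieferich p a) (han : a ^ n ≡ 1 [ZMOD p ^ (h + 1)]) : p ^ h ∣ n := by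
  rcases eq_or_ne n 0 with rfl | hn
  · exact dvd_zero _
  have hP : Prime (p : ℤ) := Nat.prime_iff_prime_int.mp hp
  have hpa : ¬ (p : ℤ) ∣ a := fun hpa => hP.not_dvd_one <|
    (Int.ModEq.dvd_iff (han.of_dvd (dvd_pow_self _ h.succ_ne_zero))).mp (dvd_pow hpa hn)
  have hfermat : (p : ℤ) ∣ a ^ (p - 1) - 1 :=
    (Int.ModEq.pow_card_sub_one_eq_one hp
      ((Prime.coprime_iff_not_dvd hP).mpr hpa).symm).symm.dvd
  have hmul : emultiplicity (p : ℤ) (a ^ (p - 1) - 1) = 1 := by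
    refine emultiplicity_eq_coe.mpr ⟨by simpa using hfermat, fun hsq => ha ?_⟩
    exact (Int.modEq_iff_dvd.mpr hsq).symm
  have hlte := Int.emultiplicity_pow_sub_pow (x := a ^ (p - 1)) (y := 1) hp
    (hp.odd_of_ne_two hp2) hfermat (fun hdvd => hpa (hP.dvd_of_dvd_pow hdvd)) n
  have hdvd : (p : ℤ) ^ (h + 1) ∣ (a ^ (p - 1)) ^ n - 1 := by
    rw [← pow_mul, mul_comm, pow_mul]
    exact han.symm.dvd.trans (sub_one_dvd_pow_sub_one _ _)
  have hle := le_emultiplicity_of_pow_dvd hdvd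
  rw [one_pow, hmul] at hlte
  rw [hlte, Nat.cast_add, Nat.cast_one, add_comm] at hle
  exact pow_dvd_of_le_emultiplicity ((ENat.add_le_add_iff_left (by simp)).mp hle)

theorem mul_dvd_add_pow_sub {R : Type*} [CommRing R] (x y : R) (n : ℕ) :
    x * y ∣ (x + y) ^ (n + 1) - (x ^ (n + 1) + y ^ (n + 1)) := by
  induction n with
  | zero => simp
  | succ n ih =>
    have hrec : (x + y) ^ (n + 2) - (x ^ (n + 2) + y ^ (n + 2)) =
        (x + y) * ((x + y) ^ (n + 1) - (x ^ (n + 1) + y ^ (n + 1))) +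
          x * y * (x ^ n + y ^ n) := by ring
    rw [hrec]
    exact dvd_add (ih.mul_left _) (dvd_mul_right _ _)

section QuadraticRing

variable {d : ℤ}

theorem zsqrtd_norm_eq (z : ℤ√d) : z.norm = z.re ^ 2 - d * z.im ^ 2 := by
  rw [Zsqrtd.norm_def]
  ring

theorem zsqrtd_norm_pow (z : ℤ√d) (n : ℕ) : (z ^ n).norm = z.norm ^ n :=
  map_pow Zsqrtd.normMonoidHom z n

theorem add_star_eq_two_mul_re (z : ℤ√d) : z + star z = ((2 * z.re : ℤ) : ℤ√d) := by
  ext <;> simp [two_mul]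

theorem re_dvd_re_pow (z : ℤ√d) {n : ℕ} (hn : Odd n) : z.re ∣ (z ^ n).re := by
  have h := Odd.add_dvd_pow_add_pow z (star z) hn
  rw [← star_pow, add_star_eq_two_mul_re, add_star_eq_two_mul_re, Zsqrtd.intCast_dvd_intCast] at h
  exact (mul_dvd_mul_iff_left two_ne_zero).mp h

theorem norm_dvd_two_mul_re_pow_sub (z : ℤ√d) {n : ℕ} (hn : n ≠ 0) :
    z.norm ∣ (2 * z.re) ^ n - 2 * (z ^ n).re := by
  obtain ⟨n, rfl⟩ := Nat.exists_eq_add_one_of_ne_zero hn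
  have h := mul_dvd_add_pow_sub z (star z) n
  rwa [← Zsqrtd.norm_eq_mul_conj, ← star_pow, add_star_eq_two_mul_re, add_star_eq_two_mul_re,
    ← Int.cast_pow, ← Int.cast_sub, Zsqrtd.intCast_dvd_intCast] at h

theorem odd_re_pow_of_odd_re {z : ℤ√d} (hnorm : Odd z.norm) (hre : Odd z.re) (n : ℕ) :
    Odd (z ^ n).re := by
  have him : Even (d * z.im) := by
    rw [zsqrtd_norm_eq, Int.odd_sub] at hnorm
    have hsq : Even (d * z.im ^ 2) := hnorm.mp hre.pow
    grind [Int.even_pow]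
  induction n with
  | zero => simp
  | succ n ih =>
    rw [pow_succ, Zsqrtd.re_mul, show d * (z ^ n).im * z.im = d * z.im * (z ^ n).im by ring]
    exact (ih.mul hre).add_even (him.mul_right _)

theorem odd_re_pow_of_even {z : ℤ√d} (hnorm : Odd z.norm) {n : ℕ} (hn : Even n) :
    Odd (z ^ n).re := by
  obtain ⟨k, rfl⟩ := hn
  rw [← two_mul, pow_mul]
  refine odd_re_pow_of_odd_re (by rw [zsqrtd_norm_pow]; exact hnorm.pow) ?_ k
  have hsq : (z ^ 2).re = z.norm + 2 * (d * z.im ^ 2) := by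
    rw [zsqrtd_norm_eq, sq, Zsqrtd.re_mul]
    ring
  rw [hsq]
  exact hnorm.add_even (even_two_mul _)

theorem dvd_of_norm_dvd_im_mul_star {x y : ℤ√d} (hx : x.norm ≠ 0) (hxy : x.norm ∣ y.norm)
    (him : x.norm ∣ (y * star x).im) : x ∣ y := by
  have hre : x.norm ∣ (y * star x).re := by
    rw [← Int.pow_dvd_pow_iff two_ne_zero]
    have hsum : (y * star x).re ^ 2 = y.norm * x.norm + d * (y * star x).im ^ 2 := by
      have h := zsqrtd_norm_eq (y * star x)
      rw [Zsqrtd.norm_mul, Zsqrtd.norm_conj] at h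
      linear_combination -h
    rw [hsum, sq x.norm]
    exact dvd_add (mul_dvd_mul_right hxy _) ((sq x.norm ▸ pow_dvd_pow_of_dvd him 2).mul_left _)
  obtain ⟨w, hw⟩ := (Zsqrtd.intCast_dvd x.norm (y * star x)).mpr ⟨hre, him⟩
  have hnorm : ((x.norm : ℤ) : ℤ√d) * y = (x.norm : ℤ) * (x * w) := by
    calc _ = x * (y * star x) := by rw [Zsqrtd.norm_eq_mul_conj]; ring
      _ = _ := by rw [hw]; ring
  exact ⟨w, Zsqrtd.eq_of_smul_eq_smul_left hx hnorm⟩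

/-- The element `z` of `ℤ√d` has norm `p ^ n` and is not divisible by the prime `p`. Given the norm,
it is enough to require that `p` does not divide the rational part of `z` if `n ≠ 0` and `p ∤ d`. -/
structure IsPrimitive (p n : ℕ) (z : ℤ√d) : Prop where
  norm_eq : z.norm = p ^ n
  not_dvd_re : ¬ (p : ℤ) ∣ z.re

namespace IsPrimitive

variable {p m n : ℕ} {x y z : ℤ√d}

protected theorem star (hz : IsPrimitive p n z) : IsPrimitive p n (star z) :=
  ⟨by rw [Zsqrtd.norm_conj, hz.norm_eq], by rw [Zsqrtd.re_star]; exact hz.not_dvd_re⟩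

theorem not_dvd_im (hp : p.Prime) (hn : n ≠ 0) (hz : IsPrimitive p n z) : ¬ (p : ℤ) ∣ z.im := by
  intro him
  have hsq : z.re ^ 2 = p ^ n + d * z.im ^ 2 := by rw [← hz.norm_eq, zsqrtd_norm_eq]; ring
  refine hz.not_dvd_re ((Nat.prime_iff_prime_int.mp hp).dvd_of_dvd_pow (n := 2) ?_)
  rw [hsq]
  exact dvd_add (dvd_pow_self _ hn) ((him.pow two_ne_zero).mul_left _)

theorem not_dvd_radicand (hp : p.Prime) (hn : n ≠ 0) (hz : IsPrimitive p n z) :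
    ¬ (p : ℤ) ∣ d := by
  intro hd
  have hsq : z.re ^ 2 = p ^ n + d * z.im ^ 2 := by rw [← hz.norm_eq, zsqrtd_norm_eq]; ring
  refine hz.not_dvd_re ((Nat.prime_iff_prime_int.mp hp).dvd_of_dvd_pow (n := 2) ?_)
  rw [hsq]
  exact dvd_add (dvd_pow_self _ hn) (hd.mul_right _)

theorem dvd_or_dvd_star (hp : p.Prime) (hp2 : p ≠ 2) (hpd : ¬ (p : ℤ) ∣ d) (hmn : m ≤ n)
    (hx : IsPrimitive p m x) (hy : IsPrimitive p n y) : x ∣ y ∨ x ∣ star y := by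
  have hP : Prime (p : ℤ) := Nat.prime_iff_prime_int.mp hp
  have hx0 : x.norm ≠ 0 := by rw [hx.norm_eq]; exact pow_ne_zero _ hP.ne_zero
  have hxy : x.norm ∣ y.norm := by rw [hx.norm_eq, hy.norm_eq]; exact pow_dvd_pow _ hmn
  rcases eq_or_ne m 0 with rfl | hm
  · exact .inl (dvd_of_norm_dvd_im_mul_star hx0 hxy (by simp [hx.norm_eq]))
  have hprod : (p : ℤ) ^ m ∣ (y * star x).im * (star y * star x).im := by
    refine hP.pow_dvd_of_dvd_mul_left m hpd ?_
    have heq : d * ((y * star x).im * (star y * star x).im) =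
        y.norm * x.re ^ 2 - y.re ^ 2 * x.norm := by
      simp only [Zsqrtd.im_mul, Zsqrtd.re_star, Zsqrtd.im_star, zsqrtd_norm_eq]
      ring
    rw [heq, ← hx.norm_eq]
    exact dvd_sub (hxy.mul_right _) (dvd_mul_left _ _)
  have hnot : ¬ ((p : ℤ) ∣ (y * star x).im ∧ (p : ℤ) ∣ (star y * star x).im) := by
    rintro ⟨h1, h2⟩
    have hsub : (y * star x).im - (star y * star x).im = 2 * (y.im * x.re) := by
      simp only [Zsqrtd.im_mul, Zsqrtd.re_star, Zsqrtd.im_star]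
      ring
    rcases hP.dvd_or_dvd (hsub ▸ dvd_sub h1 h2) with h | h
    · exact hp2 ((Nat.prime_dvd_prime_iff_eq hp Nat.prime_two).mp (by exact_mod_cast h))
    · exact (hP.dvd_or_dvd h).elim (hy.not_dvd_im hp (by omega)) hx.not_dvd_re
  by_cases h : (p : ℤ) ∣ (y * star x).im
  · refine .inl (dvd_of_norm_dvd_im_mul_star hx0 hxy ?_)
    rw [hx.norm_eq]
    exact hP.pow_dvd_of_dvd_mul_right m (fun h' => hnot ⟨h, h'⟩) hprod
  · refine .inr (dvd_of_norm_dvd_im_mul_star hx0 (by rwa [Zsqrtd.norm_conj]) ?_)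
    rw [hx.norm_eq]
    exact hP.pow_dvd_of_dvd_mul_left m h hprod

protected theorem pow (hp : p.Prime) (hp2 : p ≠ 2) (hn : n ≠ 0) (hz : IsPrimitive p n z) (k : ℕ) :
    IsPrimitive p (n * k) (z ^ k) := by
  refine ⟨by rw [zsqrtd_norm_pow, hz.norm_eq, pow_mul], fun hdvd => ?_⟩
  have hP : Prime (p : ℤ) := Nat.prime_iff_prime_int.mp hp
  rcases eq_or_ne k 0 with rfl | hk
  · exact hP.not_dvd_one (by simpa using hdvd)
  have hsub : (p : ℤ) ∣ (2 * z.re) ^ k - 2 * (z ^ k).re :=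
    (hz.norm_eq ▸ dvd_pow_self _ hn).trans (norm_dvd_two_mul_re_pow_sub z hk)
  have h2re := hP.dvd_of_dvd_pow ((dvd_sub_left (hdvd.mul_left 2)).mp hsub)
  rcases hP.dvd_or_dvd h2re with h | h
  · exact hp2 ((Nat.prime_dvd_prime_iff_eq hp Nat.prime_two).mp (by exact_mod_cast h))
  · exact hz.not_dvd_re h

theorem of_mul (hp : p.Prime) (hpd : ¬ (p : ℤ) ∣ d) (hn : n ≠ 0)
    (hx : IsPrimitive p m x) (hxy : IsPrimitive p (m + n) (x * y)) : IsPrimitive p n y := by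
  have hP : Prime (p : ℤ) := Nat.prime_iff_prime_int.mp hp
  have hnorm : y.norm = p ^ n := by
    have h := hxy.norm_eq
    rw [Zsqrtd.norm_mul, hx.norm_eq, pow_add] at h
    exact mul_left_cancel₀ (pow_ne_zero _ hP.ne_zero) h
  refine ⟨hnorm, fun hre => ?_⟩
  have him : (p : ℤ) ∣ y.im := by
    have hsq : d * y.im ^ 2 = y.re ^ 2 - p ^ n := by rw [← hnorm, zsqrtd_norm_eq]; ring
    have hdvd : (p : ℤ) ∣ d * y.im ^ 2 := by
      rw [hsq]
      exact dvd_sub (hre.pow two_ne_zero) (dvd_pow_self _ hn)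
    exact hP.dvd_of_dvd_pow ((hP.dvd_or_dvd hdvd).resolve_left hpd)
  refine hxy.not_dvd_re ?_
  rw [Zsqrtd.re_mul]
  exact dvd_add (hre.mul_left _) (him.mul_left _)

end IsPrimitive

theorem eq_one_or_eq_neg_one_of_norm_eq_one (hd : d < -1) {z : ℤ√d} (hz : z.norm = 1) :
    z = 1 ∨ z = -1 := by
  rw [zsqrtd_norm_eq] at hz
  have him : z.im = 0 := by
    by_contra h
    nlinarith [sq_nonneg z.re, Int.add_one_le_iff.mpr (sq_pos_of_ne_zero h)]
  have hre : z.re ^ 2 = 1 ^ 2 := by simpa [him] using hz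
  exact (sq_eq_sq_iff_eq_or_eq_neg.mp hre).imp (fun h => by ext <;> simp [h, him])
    (fun h => by ext <;> simp [h, him])

theorem exists_isPrimitive_minimal {p : ℕ}
    (hex : ∃ n ≠ 0, ∃ y : ℤ√d, IsPrimitive p n y) :
    ∃ g ≠ 0, (∃ α : ℤ√d, IsPrimitive p g α) ∧
      ∀ n ≠ 0, ∀ y : ℤ√d, IsPrimitive p n y → g ≤ n := by
  classical
  exact ⟨Nat.find hex, (Nat.find_spec hex).1, (Nat.find_spec hex).2,
    fun n hn y hy => Nat.find_min' hex ⟨hn, y, hy⟩⟩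

-- `ℤ√d` need not be integrally closed, so minimality of `g` replaces the factorization of ideals.
theorem IsPrimitive.eq_mul_and_abs_re_eq {p g n : ℕ} {α y : ℤ√d} (hp : p.Prime) (hp2 : p ≠ 2)
    (hd : d < -1) (hpd : ¬ (p : ℤ) ∣ d) (hg : g ≠ 0) (hα : IsPrimitive p g α)
    (hmin : ∀ n ≠ 0, ∀ y : ℤ√d, IsPrimitive p n y → g ≤ n) (hy : IsPrimitive p n y) :
    ∃ k, n = g * k ∧ |y.re| = |(α ^ k).re| := by
  have hαk := hα.pow hp hp2 hg (n / g)
  obtain ⟨y', hy', hre, w, hw⟩ :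
      ∃ y', IsPrimitive p n y' ∧ y'.re = y.re ∧ α ^ (n / g) ∣ y' := by
    rcases hαk.dvd_or_dvd_star hp hp2 hpd (Nat.mul_div_le n g) hy with h | h
    exacts [⟨y, hy, rfl, h⟩, ⟨star y, hy.star, Zsqrtd.re_star y, h⟩]
  rw [← Nat.div_add_mod n g, hw] at hy'
  have hmod : n % g = 0 := by
    by_contra hr
    have hle := hmin _ hr w (hαk.of_mul hp hpd hr hy')
    exact absurd (Nat.mod_lt n (Nat.pos_of_ne_zero hg)) (by omega)
  have hwnorm : w.norm = 1 := by
    have h := hy'.norm_eq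
    rw [hmod, add_zero, Zsqrtd.norm_mul, hαk.norm_eq] at h
    exact mul_eq_left₀ (pow_ne_zero _ (Nat.cast_ne_zero.mpr hp.ne_zero)) |>.mp h
  refine ⟨n / g, (Nat.mul_div_cancel' (Nat.dvd_of_mod_eq_zero hmod)).symm, ?_⟩
  rcases eq_one_or_eq_neg_one_of_norm_eq_one hd hwnorm with rfl | rfl
  · rw [← hre, hw, mul_one]
  · rw [← hre, hw, mul_neg_one, Zsqrtd.re_neg, abs_neg]

end QuadraticRing

section Determinants

open Matrix Polynomial

theorem norm_det_le_factorial_mul_prod {ι 𝕜 : Type*} [Fintype ι] [DecidableEq ι] [NormedField 𝕜]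
    {A : Matrix ι ι 𝕜} {B : ι → ℝ} (h : ∀ i j, ‖A i j‖ ≤ B i) :
    ‖A.det‖ ≤ (Fintype.card ι).factorial * ∏ i, B i := by
  rw [← det_transpose, det_apply]
  refine (norm_sum_le _ _).trans <|
    (Finset.sum_le_card_nsmul _ _ (∏ i, B i) fun σ _ => ?_).trans_eq ?_
  · have hsign : ‖((Equiv.Perm.sign σ : ℤ) : 𝕜)‖ = 1 := by
      rcases Int.units_eq_one_or (Equiv.Perm.sign σ) with h | h <;> simp [h]
    rw [Units.smul_def, zsmul_eq_mul, norm_mul, norm_prod, hsign, one_mul]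
    exact Finset.prod_le_prod (fun _ _ => norm_nonneg _) (fun i _ => h i _)
  · rw [Finset.card_univ, Fintype.card_perm, nsmul_eq_mul]

theorem differentiable_det {ι 𝕜 E : Type*} [Fintype ι] [DecidableEq ι] [NontriviallyNormedField 𝕜]
    [NormedAddCommGroup E] [NormedSpace 𝕜 E] {A : E → Matrix ι ι 𝕜}
    (h : ∀ i j, Differentiable 𝕜 fun z => A z i j) : Differentiable 𝕜 fun z => (A z).det := by
  simp only [det_apply']
  fun_prop

theorem exists_det_submatrix_ne_zero {m n F : Type*} [Fintype m] [DecidableEq m] [Finite n]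
    [Field F] {A : Matrix m n F} (h : LinearIndependent F A.row) :
    ∃ g : m → n, Function.Injective g ∧ (A.submatrix id g).det ≠ 0 := by
  have := Fintype.ofFinite n
  obtain ⟨κ, a, ha, hspan, hli⟩ := exists_linearIndependent' F A.col
  have htop : Submodule.span F (Set.range A.col) = ⊤ := by
    apply Submodule.eq_top_of_finrank_eq
    rw [← rank_eq_finrank_span_cols, h.rank_matrix, Module.finrank_fintype_fun_eq_card]
  have : Finite κ := Finite.of_injective a ha
  have := Fintype.ofFinite κ
  have hcard : Fintype.card m = Fintype.card κ := by
    rw [← finrank_span_eq_card hli, hspan, htop, finrank_top, Module.finrank_fintype_fun_eq_card]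
  let e := Fintype.equivOfCardEq hcard
  have hcols : LinearIndependent F (A.submatrix id (a ∘ e)).col := hli.comp e e.injective
  exact ⟨a ∘ e, ha.comp e.injective,
    ((isUnit_iff_isUnit_det _).mp (linearIndependent_cols_iff_isUnit.mp hcols)).ne_zero⟩

theorem coeff_prod_sum_of_natDegree_le {ι R : Type*} [CommSemiring R] (s : Finset ι)
    {f : ι → R[X]} {d : ι → ℕ} (h : ∀ i ∈ s, (f i).natDegree ≤ d i) :
    (∏ i ∈ s, f i).coeff (∑ i ∈ s, d i) = ∏ i ∈ s, (f i).coeff (d i) := by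
  classical
  induction s using Finset.induction_on with
  | empty => simp
  | insert i s hi ih =>
    rw [Finset.forall_mem_insert] at h
    rw [Finset.prod_insert hi, Finset.sum_insert hi, Finset.prod_insert hi,
      coeff_mul_add_eq_of_natDegree_le h.1, ih h.2]
    exact (natDegree_prod_le _ _).trans (Finset.sum_le_sum h.2)

section PolynomialMatrix

variable {ι R : Type*} [Fintype ι] [DecidableEq ι] [CommRing R] {A : Matrix ι ι R[X]} {d : ι → ℕ}

theorem natDegree_det_le (h : ∀ i k, (A i k).natDegree ≤ d k) : A.det.natDegree ≤ ∑ k, d k := by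
  rw [det_apply']
  refine natDegree_sum_le_of_forall_le _ _ fun σ _ => ?_
  rw [← C_eq_intCast]
  exact (natDegree_C_mul_le _ _).trans <|
    (natDegree_prod_le _ _).trans (Finset.sum_le_sum fun i _ => h _ i)

theorem coeff_det_sum (h : ∀ i k, (A i k).natDegree ≤ d k) :
    A.det.coeff (∑ k, d k) = (Matrix.of fun i k => (A i k).coeff (d k)).det := by
  rw [det_apply', det_apply', finsetSum_coeff]
  refine Finset.sum_congr rfl fun σ _ => ?_
  rw [← C_eq_intCast, coeff_C_mul, coeff_prod_sum_of_natDegree_le _ fun i _ => h _ i]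
  rfl

end PolynomialMatrix

section ZeroEstimate

variable {F : Type*} [Field F]

/-- The square matrix of the coefficients of an exponential polynomial `∑ k, P k (y) * x k ^ s`
along the shifts `(y, s) ↦ (y + j * i, s + i)`, as polynomials in `y`. -/
noncomputable def shiftMatrix {m : ℕ} (x : Fin m → F) (j : F) (P : Fin m → F[X]) :
    Matrix (Fin m) (Fin m) F[X] :=
  Matrix.of fun i k => C (x k ^ (i : ℕ)) * taylor (j * (i : ℕ)) (P k)

variable {m : ℕ} {x : Fin m → F} {j : F} {P : Fin m → F[X]}

theorem natDegree_shiftMatrix_apply_le (i k : Fin m) :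
    (shiftMatrix x j P i k).natDegree ≤ (P k).natDegree :=
  (natDegree_C_mul_le _ _).trans (natDegree_taylor _ _).le

theorem det_shiftMatrix_ne_zero (hx : Function.Injective x) (hP : ∀ k, P k ≠ 0) :
    (shiftMatrix x j P).det ≠ 0 := by
  intro h0
  have hlead := coeff_det_sum (natDegree_shiftMatrix_apply_le (x := x) (j := j) (P := P))
  have hfactor : (Matrix.of fun i k => (shiftMatrix x j P i k).coeff (P k).natDegree) =
      (vandermonde x)ᵀ * diagonal fun k => (P k).leadingCoeff := by
    ext i k
    rw [mul_diagonal, transpose_apply, vandermonde_apply, of_apply, shiftMatrix, of_apply,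
      coeff_C_mul, coeff_taylor_natDegree]
  rw [h0, coeff_zero, hfactor, det_mul, det_transpose, det_diagonal] at hlead
  exact mul_ne_zero (det_vandermonde_ne_zero_iff.mpr hx)
    (Finset.prod_ne_zero_iff.mpr fun k _ => leadingCoeff_ne_zero.mpr (hP k)) hlead.symm

theorem eval_det_shiftMatrix_eq_zero {a : Fin m → F} (ha : a ≠ 0) {y : F}
    (h : ∀ i < m, ∑ k, a k * x k ^ i * (P k).eval (y + j * i) = 0) :
    (shiftMatrix x j P).det.eval y = 0 := by
  rw [← coe_evalRingHom, RingHom.map_det]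
  refine exists_mulVec_eq_zero_iff.mp ⟨a, ha, ?_⟩
  ext i
  rw [Pi.zero_apply, ← h i i.isLt, mulVec, dotProduct]
  refine Finset.sum_congr rfl fun k _ => ?_
  simp only [shiftMatrix, RingHom.mapMatrix_apply, map_apply, of_apply, coe_evalRingHom, eval_mul,
    eval_C, taylor_eval]
  ring

theorem eq_zero_of_exponential_sum_eq_zero {Λ κ : Type*} [Fintype Λ] [Fintype κ] {x : Λ → F}
    (hx : Function.Injective x) {P : Λ → F[X]} {d : ℕ} (hP : ∀ l, (P l).natDegree ≤ d)
    {y : κ → F} (hy : Function.Injective y) (hcard : Fintype.card Λ * d < Fintype.card κ)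
    {a : κ → Λ → F} (ha : ∀ t l, a t l ≠ 0)
    (h : ∀ t, ∀ i < Fintype.card Λ, ∑ l, a t l * x l ^ i * (P l).eval (y t + j * i) = 0) :
    P = 0 := by
  classical
  by_contra hP0
  obtain ⟨l₀, hl₀⟩ : ∃ l, P l ≠ 0 := Function.ne_iff.mp hP0
  let e := (Fintype.equivFin {l // P l ≠ 0}).symm
  have hcard_le := Fintype.card_subtype_le fun l => P l ≠ 0
  refine det_shiftMatrix_ne_zero (x := fun k => x (e k)) (j := j)
    (hx.comp (Subtype.val_injective.comp e.injective)) (fun k => (e k).2) ?_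
  refine eq_zero_of_natDegree_lt_card_of_eval_eq_zero _ hy (fun t => ?_) ?_
  · refine eval_det_shiftMatrix_eq_zero (a := fun k => a t (e k))
      (fun ha0 => ha t l₀ ?_) fun i hi => ?_
    · simpa using congrFun ha0 (e.symm ⟨l₀, hl₀⟩)
    · rw [e.sum_comp fun l => a t l * x l ^ i * (P l).eval (y t + j * i), ← h t i (by omega),
        ← Finset.sum_subtype (Finset.univ.filter fun l => P l ≠ 0) (by simp)
          fun l => a t l * x l ^ i * (P l).eval (y t + j * i)]
      exact Finset.sum_filter_of_ne fun l _ hne h0 => hne (by rw [h0, eval_zero, mul_zero])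
  · refine (natDegree_det_le fun i k => (natDegree_shiftMatrix_apply_le i k).trans (hP _)).trans_lt
      (lt_of_le_of_lt ?_ hcard)
    rw [Finset.sum_const, Finset.card_univ, Fintype.card_fin, smul_eq_mul]
    exact Nat.mul_le_mul_right d hcard_le

end ZeroEstimate

end Determinants

section InterpolationDeterminants

open Matrix Metric

theorem exists_eq_sum_add_pow_mul_of_differentiable {f : ℂ → ℂ} (hf : Differentiable ℂ f) (M : ℕ) :
    ∃ (a : ℕ → ℂ) (h : ℂ → ℂ), Differentiable ℂ h ∧
      ∀ z, f z = ∑ n ∈ Finset.range M, a n * z ^ n + z ^ M * h z := by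
  induction M with
  | zero => exact ⟨0, f, hf, by simp⟩
  | succ M ih =>
    obtain ⟨a, h, hh, hfa⟩ := ih
    refine ⟨Function.update a M (h 0), dslope h 0, ?_, fun z => ?_⟩
    · rw [← differentiableOn_univ] at hh ⊢
      exact (Complex.differentiableOn_dslope Filter.univ_mem).mpr hh
    · have hslope : z * dslope h 0 z = h z - h 0 := by simpa using sub_smul_dslope h 0 z
      have hlow : ∑ n ∈ Finset.range M, Function.update a M (h 0) n * z ^ n =
          ∑ n ∈ Finset.range M, a n * z ^ n :=
        Finset.sum_congr rfl fun n hn => by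
          rw [Function.update_of_ne (Finset.mem_range.mp hn).ne]
      rw [Finset.sum_range_succ, hlow, Function.update_self, pow_succ, mul_assoc, hslope, hfa z]
      ring

theorem norm_apply_one_mul_pow_le {F Φ : ℂ → ℂ} {k : ℕ} (hΦ : Differentiable ℂ Φ)
    (hF : ∀ z, F z = z ^ k * Φ z) {ρ C : ℝ} (hρ : 1 ≤ ρ) (hC : ∀ z, ‖z‖ = ρ → ‖F z‖ ≤ C) :
    ‖F 1‖ * ρ ^ k ≤ C := by
  have hρ0 : 0 < ρ := zero_lt_one.trans_le hρ
  rw [← le_div_iff₀ (pow_pos hρ0 k), hF, one_pow, one_mul]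
  refine Complex.norm_le_of_forall_mem_frontier_norm_le (U := ball (0 : ℂ) ρ) isBounded_ball
    hΦ.diffContOnCl (fun z hz => ?_) (by rw [closure_ball _ hρ0.ne']; simpa using hρ)
  rw [frontier_ball _ hρ0.ne', mem_sphere_zero_iff_norm] at hz
  rw [le_div_iff₀ (pow_pos hρ0 k), mul_comm, ← hz, ← norm_pow, ← norm_mul, ← hF]
  exact hC z hz

/- If `V` is the transposed Vandermonde matrix of `u`, cutting the Taylor series of the `f i` at
order `M` gives `f i (z * u j) + z ^ M * ε i j` as the `(i, j)` entry of
`A * diagonal (z ^ n) * V + z ^ M • H z`, and this is a multiple of `diagonal (z ^ n) * V` because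
`z ^ M = z ^ (M - n) * z ^ n`. -/
theorem exists_det_eq_pow_choose_two_mul {M : ℕ} {f : Fin M → ℂ → ℂ}
    (hf : ∀ i, Differentiable ℂ (f i)) {u : Fin M → ℂ} (hu : Function.Injective u)
    (ε : Fin M → Fin M → ℂ) :
    ∃ Φ : ℂ → ℂ, Differentiable ℂ Φ ∧ ∀ z,
      (Matrix.of fun i j => f i (z * u j) + z ^ M * ε i j).det = z ^ M.choose 2 * Φ z := by
  choose a h hh hfa using fun i => exists_eq_sum_add_pow_mul_of_differentiable (hf i) M
  let V : Matrix (Fin M) (Fin M) ℂ := (vandermonde u)ᵀ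
  have hV : IsUnit V.det := by
    rw [det_transpose, isUnit_iff_ne_zero]
    exact det_vandermonde_ne_zero_iff.mpr hu
  let A : Matrix (Fin M) (Fin M) ℂ := Matrix.of fun i n => a i n
  let H (z : ℂ) : Matrix (Fin M) (Fin M) ℂ :=
    Matrix.of fun i j => u j ^ M * h i (z * u j) + ε i j
  let D (z : ℂ) : Matrix (Fin M) (Fin M) ℂ := diagonal fun n => z ^ (n : ℕ)
  let D' (z : ℂ) : Matrix (Fin M) (Fin M) ℂ := diagonal fun n => z ^ (M - (n : ℕ))
  have hD (z : ℂ) : D' z * D z = z ^ M • 1 := by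
    rw [diagonal_mul_diagonal, smul_one_eq_diagonal]
    congr 1
    funext n
    rw [← pow_add, Nat.sub_add_cancel n.isLt.le]
  have htaylor (z : ℂ) : (Matrix.of fun i j => f i (z * u j) + z ^ M * ε i j) =
      A * D z * V + z ^ M • H z := by
    ext i j
    rw [Matrix.add_apply, mul_apply]
    simp only [A, D, V, H, of_apply, Matrix.smul_apply, smul_eq_mul, mul_diagonal, transpose_apply,
      vandermonde_apply, hfa i (z * u j), Finset.sum_range, mul_pow]
    rw [mul_add, add_assoc]
    exact congrArg₂ _ (Finset.sum_congr rfl fun n _ => by ring) (by ring)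
  have hfactor (z : ℂ) : A * D z * V + z ^ M • H z = (A + H z * V⁻¹ * D' z) * D z * V := by
    rw [Matrix.add_mul, Matrix.add_mul, Matrix.mul_assoc (H z * V⁻¹), hD, Matrix.mul_smul,
      Matrix.mul_one, Matrix.smul_mul, Matrix.mul_assoc (H z), nonsing_inv_mul _ hV, Matrix.mul_one]
  refine ⟨fun z => (A + H z * V⁻¹ * D' z).det * V.det, ?_, fun z => ?_⟩
  · refine (differentiable_det fun i j => ?_).mul_const _
    simp only [H, D', Matrix.add_apply, mul_diagonal]
    simp only [mul_apply, of_apply]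
    fun_prop
  · rw [htaylor, hfactor, det_mul, det_mul, det_diagonal, Finset.prod_pow_eq_pow_sum,
      Fin.sum_univ_eq_sum_range fun n => n, Finset.sum_range_id, ← Nat.choose_two_right]
    ring

theorem norm_interpolation_det_mul_pow_le {ι : Type*} [Fintype ι] [DecidableEq ι] {f : ι → ℂ → ℂ}
    (hf : ∀ i, Differentiable ℂ (f i)) {u : ι → ℂ} (hu : Function.Injective u) {ρ : ℝ}
    (hρ : 1 ≤ ρ) {B : ι → ℝ} (hB : ∀ i j z, ‖z‖ = ρ → ‖f i (z * u j)‖ ≤ B i) {ε : ι → ι → ℂ}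
    (hε : ∀ i j, ρ ^ Fintype.card ι * ‖ε i j‖ ≤ B i) :
    ‖(Matrix.of fun i j => f i (u j) + ε i j).det‖ * ρ ^ (Fintype.card ι).choose 2 ≤
      (Fintype.card ι).factorial * ∏ i, (2 * B i) := by
  let e := (Fintype.equivFin ι).symm
  obtain ⟨Φ, hΦ, hdet⟩ := exists_det_eq_pow_choose_two_mul (fun i => hf (e i))
    (hu.comp e.injective) fun i j => ε (e i) (e j)
  have hreindex (z : ℂ) : (Matrix.of fun i j => f i (z * u j) + z ^ Fintype.card ι * ε i j).det =
      z ^ (Fintype.card ι).choose 2 * Φ z := by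
    rw [← hdet, ← det_submatrix_equiv_self e]
    rfl
  have hbound (z : ℂ) (hz : ‖z‖ = ρ) :
      ‖(Matrix.of fun i j => f i (z * u j) + z ^ Fintype.card ι * ε i j).det‖ ≤
        (Fintype.card ι).factorial * ∏ i, (2 * B i) := by
    refine norm_det_le_factorial_mul_prod fun i j => (norm_add_le _ _).trans ?_
    rw [norm_mul, norm_pow, hz]
    linarith [hB i j z hz, hε i j]
  simpa only [one_mul, one_pow] using norm_apply_one_mul_pow_le hΦ hreindex hρ hbound

end InterpolationDeterminants

section InterpolationMatrix

open Matrix Polynomial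

/-- The integers `k` with `|k| ≤ n`. -/
abbrev SymmInterval (n : ℕ) : Type := Finset.Icc (-n : ℤ) n

theorem SymmInterval.abs_le {n : ℕ} (k : SymmInterval n) : |(k : ℤ)| ≤ n :=
  _root_.abs_le.mpr (Finset.mem_Icc.mp k.2)

theorem SymmInterval.card (n : ℕ) : Fintype.card (SymmInterval n) = 2 * n + 1 := by
  rw [Fintype.card_coe, Int.card_Icc]
  omega

/-- The integer `j * s + 2 * ℓ * r`. For `ω = exp (I * π * j / ℓ)` it satisfies
`ω ^ s = exp (I * (π / ℓ) * (j * s + 2 * ℓ * r))`. -/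
def interpolationNode (j : ℤ) (ℓ : ℕ) {R S : ℕ} (q : SymmInterval R × SymmInterval S) : ℤ :=
  j * q.2 + 2 * ℓ * q.1

/-- The values of the monomials `x ^ k * ω ^ (l * s)`, one row for each, at the points `(x, s)` with
`x = j * s + 2 * ℓ * r`, one column for each. -/
def interpolationMatrix {F : Type*} [Field F] (ω : F) (j : ℤ) (ℓ K c R S : ℕ) :
    Matrix (Fin K × SymmInterval c) (SymmInterval R × SymmInterval S) F :=
  Matrix.of fun i q => (interpolationNode j ℓ q : F) ^ (i.1 : ℕ) * ω ^ ((i.2 : ℤ) * (q.2 : ℤ))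

variable {j : ℤ} {ℓ : ℕ}

theorem abs_interpolationNode_le (hj : |j| ≤ ℓ) {R S : ℕ}
    (q : SymmInterval R × SymmInterval S) : |interpolationNode j ℓ q| ≤ ℓ * (S + 2 * R) := by
  refine (abs_add_le _ _).trans ?_
  rw [abs_mul, abs_mul, abs_of_nonneg (by positivity : (0 : ℤ) ≤ 2 * ℓ)]
  have hs := mul_le_mul hj q.2.abs_le (abs_nonneg _) (by positivity)
  have hr := mul_le_mul_of_nonneg_left q.1.abs_le (by positivity : (0 : ℤ) ≤ 2 * ℓ)
  linarith

theorem interpolationNode_injective (hj : IsCoprime j ℓ) {R S : ℕ} (hS : 2 * S + 1 ≤ ℓ) :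
    Function.Injective (interpolationNode j ℓ (R := R) (S := S)) := by
  rintro ⟨r, s⟩ ⟨r', s'⟩ h
  have hdvd : (ℓ : ℤ) ∣ s - s' :=
    hj.symm.dvd_of_dvd_mul_left ⟨2 * (r' - r), by simp only [interpolationNode] at h; linarith⟩
  have hs : (s : ℤ) - s' = 0 := by
    refine Int.eq_zero_of_abs_lt_dvd hdvd ((abs_sub _ _).trans_lt ?_)
    have := s.abs_le
    have := s'.abs_le
    omega
  obtain rfl : s = s' := Subtype.ext (sub_eq_zero.mp hs)
  have hr : (2 * ℓ : ℤ) * r = 2 * ℓ * r' := by simpa [interpolationNode] using h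
  obtain rfl : r = r' := Subtype.ext (mul_left_cancel₀ (by omega) hr)
  rfl

theorem linearIndependent_row_interpolationMatrix {F : Type*} [Field F] [CharZero F] {ω : F}
    {K c R T : ℕ} (hω0 : ω ≠ 0) (hω : Function.Injective fun l : SymmInterval c => ω ^ (l : ℤ))
    (hj : IsCoprime j ℓ) (hT : 2 * T + 1 ≤ ℓ)
    (hcard : (2 * c + 1) * (K - 1) < (2 * R + 1) * (2 * T + 1)) :
    LinearIndependent F (interpolationMatrix ω j ℓ K c R (T + c)).row := by
  rw [← vecMul_injective_iff, ← coe_vecMulLinear, injective_iff_map_eq_zero]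
  intro x hx
  let P (l : SymmInterval c) : F[X] := ∑ k : Fin K, C (x (k, l)) * X ^ (k : ℕ)
  have hP : P = 0 := by
    refine eq_zero_of_exponential_sum_eq_zero (κ := SymmInterval R × SymmInterval T) (j := (j : F))
      (d := K - 1) hω (fun l => natDegree_sum_le_of_forall_le _ _ fun k _ => ?_)
      (y := fun q => (interpolationNode j ℓ q : F) - j * c)
      (fun q q' h => interpolationNode_injective hj hT (Int.cast_injective (sub_left_injective h)))
      (by simpa only [Fintype.card_prod, SymmInterval.card] using hcard)
      (a := fun q l => ω ^ ((l : ℤ) * (q.2 - c))) (fun q l => zpow_ne_zero _ hω0) fun q i hi => ?_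
    · exact (natDegree_C_mul_X_pow_le _ _).trans (Nat.le_sub_one_of_lt k.isLt)
    · have hshift := q.2.abs_le
      rw [SymmInterval.card] at hi
      have hmem : (q.2 : ℤ) - c + i ∈ Finset.Icc (-(T + c : ℕ) : ℤ) (T + c : ℕ) := by
        rw [Finset.mem_Icc]
        rw [_root_.abs_le] at hshift
        omega
      have hcol : (x ᵥ* interpolationMatrix ω j ℓ K c R (T + c)) (q.1, ⟨_, hmem⟩) = 0 :=
        congrFun hx _
      rw [← hcol, vecMul, dotProduct, Fintype.sum_prod_type_right]
      refine Finset.sum_congr rfl fun l _ => ?_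
      rw [eval_finsetSum, Finset.mul_sum]
      refine Finset.sum_congr rfl fun k _ => ?_
      simp only [interpolationMatrix, interpolationNode, of_apply, eval_mul, eval_C, eval_pow,
        eval_X]
      rw [mul_add (l : ℤ), zpow_add₀ hω0, _root_.zpow_mul, _root_.zpow_mul, zpow_natCast]
      push_cast
      ring
  ext ⟨k, l⟩
  have hcoeff : (P l).coeff k = 0 := by rw [hP, Pi.zero_apply, coeff_zero]
  simpa [P, coeff_X_pow, Fin.val_inj] using hcoeff

theorem one_le_norm_det_of_mem {O : Subring ℂ} (hO : ∀ x ∈ O, x ≠ 0 → 1 ≤ ‖x‖) {ι : Type*}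
    [Fintype ι] [DecidableEq ι] {A : Matrix ι ι ℂ} (hA : ∀ i k, A i k ∈ O) (hdet : A.det ≠ 0) :
    1 ≤ ‖A.det‖ := by
  refine hO _ ?_ hdet
  rw [det_apply']
  exact sum_mem fun σ _ => mul_mem (intCast_mem _ _) (prod_mem fun i _ => hA _ _)

theorem mul_pow_mul_div_zpow_mem {F : Type*} [Field F] {O : Subring F} {a b : F} (ha0 : a ≠ 0)
    (hb0 : b ≠ 0) (ha : a ∈ O) (hb : b ∈ O) {n : ℕ} {m : ℤ} (hm : |m| ≤ n) :
    (a * b) ^ n * (a / b) ^ m ∈ O := by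
  rw [_root_.abs_le] at hm
  obtain ⟨u, hu⟩ := Int.eq_ofNat_of_zero_le (a := n + m) (by omega)
  obtain ⟨v, hv⟩ := Int.eq_ofNat_of_zero_le (a := n - m) (by omega)
  have hpow : (a * b) ^ n * (a / b) ^ m = a ^ u * b ^ v := by
    rw [← zpow_natCast a, ← zpow_natCast b, ← hu, ← hv, zpow_add₀ ha0, zpow_sub₀ hb0, div_zpow,
      mul_pow, zpow_natCast, zpow_natCast]
    ring
  rw [hpow]
  exact mul_mem (pow_mem ha u) (pow_mem hb v)

section Bounds

variable {K c R S : ℕ} {g : Fin K × SymmInterval c → SymmInterval R × SymmInterval S}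

theorem one_le_pow_mul_norm_det_interpolationMatrix {O : Subring ℂ}
    (hO : ∀ x ∈ O, x ≠ 0 → 1 ≤ ‖x‖) {a b : ℂ} (ha0 : a ≠ 0) (hb0 : b ≠ 0) (ha : a ∈ O)
    (hb : b ∈ O) (hdet : ((interpolationMatrix (a / b) j ℓ K c R S).submatrix id g).det ≠ 0) :
    1 ≤ ‖a * b‖ ^ (c * S * (K * (2 * c + 1))) *
      ‖((interpolationMatrix (a / b) j ℓ K c R S).submatrix id g).det‖ := by
  have hscaled := one_le_norm_det_of_mem hO
    (A := (a * b) ^ (c * S) • (interpolationMatrix (a / b) j ℓ K c R S).submatrix id g)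
    (fun i k => ?_) ?_
  · rwa [det_smul, Fintype.card_prod, Fintype.card_fin, SymmInterval.card, norm_mul, ← pow_mul,
      norm_pow] at hscaled
  · rw [Matrix.smul_apply, submatrix_apply, interpolationMatrix, of_apply, smul_eq_mul,
      mul_left_comm]
    refine mul_mem (pow_mem (intCast_mem _ _) _) (mul_pow_mul_div_zpow_mem ha0 hb0 ha hb ?_)
    rw [abs_mul, Nat.cast_mul]
    exact mul_le_mul i.2.abs_le (g k).2.abs_le (abs_nonneg _) (by positivity)
  · rw [det_smul]
    exact mul_ne_zero (pow_ne_zero _ (pow_ne_zero _ (mul_ne_zero ha0 hb0))) hdet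

theorem norm_exp_I_mul_sub_exp_I_mul_le (x y : ℝ) :
    ‖Complex.exp (Complex.I * x) - Complex.exp (Complex.I * y)‖ ≤ |x - y| := by
  have hfactor : Complex.exp (Complex.I * x) - Complex.exp (Complex.I * y) =
      Complex.exp (Complex.I * y) * (Complex.exp (Complex.I * (x - y : ℝ)) - 1) := by
    rw [mul_sub, ← Complex.exp_add, mul_one, Complex.ofReal_sub]
    ring_nf
  rw [hfactor, norm_mul, Complex.norm_exp_I_mul_ofReal, one_mul]
  exact Real.norm_exp_I_mul_ofReal_sub_one_le

/-- The entire function of `x` which, for `ω = exp (I * π * j / ℓ)`, takes the value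
`(ℓ / π * x) ^ k * ω ^ (l * s)` at `x = π / ℓ * (j * s + 2 * ℓ * r)`. -/
noncomputable def interpolationFunction (ℓ k : ℕ) (l : ℤ) (x : ℂ) : ℂ :=
  (ℓ / Real.pi * x) ^ k * Complex.exp (Complex.I * (l * x))

theorem interpolationFunction_apply_node (hℓ : ℓ ≠ 0) (k : ℕ) (l : ℤ)
    (q : SymmInterval R × SymmInterval S) :
    interpolationFunction ℓ k l (Real.pi / ℓ * interpolationNode j ℓ q) =
      (interpolationNode j ℓ q : ℂ) ^ k *
        Complex.exp (Complex.I * (l * q.2 * (Real.pi * j / ℓ) : ℝ)) := by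
  have hπ : (Real.pi : ℂ) ≠ 0 := Complex.ofReal_ne_zero.mpr Real.pi_ne_zero
  have hℓ' : (ℓ : ℂ) ≠ 0 := Nat.cast_ne_zero.mpr hℓ
  refine congrArg₂ (· * ·) (congrArg (· ^ k) (by field_simp)) ?_
  rw [Complex.exp_eq_exp_iff_exists_int]
  refine ⟨l * q.1, ?_⟩
  simp only [interpolationNode]
  push_cast
  field_simp

theorem norm_interpolationFunction_le (ℓ k : ℕ) {l : ℤ} (hl : |l| ≤ c) {x : ℂ} {r : ℝ}
    (hx : ‖x‖ ≤ Real.pi * r) :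
    ‖interpolationFunction ℓ k l x‖ ≤ (ℓ * r) ^ k * Real.exp (c * (Real.pi * r)) := by
  have hπ := Real.pi_pos
  rw [interpolationFunction, norm_mul, norm_pow, norm_mul, norm_div, Complex.norm_natCast,
    Complex.norm_real, Real.norm_eq_abs, abs_of_pos hπ, Complex.norm_exp]
  have hr : 0 ≤ r := nonneg_of_mul_nonneg_right ((norm_nonneg x).trans hx) hπ
  refine mul_le_mul (pow_le_pow_left₀ (by positivity) ?_ _) (Real.exp_le_exp.mpr ?_)
    (Real.exp_pos _).le (by positivity)
  · calc ℓ / Real.pi * ‖x‖ ≤ ℓ / Real.pi * (Real.pi * r) := by gcongr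
      _ = ℓ * r := by field_simp
  · refine (Complex.re_le_norm _).trans ?_
    rw [norm_mul, Complex.norm_I, one_mul, norm_mul, Complex.norm_intCast]
    exact mul_le_mul (by exact_mod_cast hl) hx (norm_nonneg _) (by positivity)

theorem norm_interpolationMatrix_sub_le (hj : |j| ≤ ℓ) (hℓ : ℓ ≠ 0) (θ : ℝ)
    (i : Fin K × SymmInterval c) (q : SymmInterval R × SymmInterval S) :
    ‖interpolationMatrix (Complex.exp (Complex.I * θ)) j ℓ K c R S i q -
        interpolationFunction ℓ i.1 i.2 (Real.pi / ℓ * interpolationNode j ℓ q)‖ ≤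
      (ℓ * (S + 2 * R)) ^ (i.1 : ℕ) * (c * S * |θ - Real.pi * j / ℓ|) := by
  rw [interpolationFunction_apply_node hℓ, interpolationMatrix, of_apply, ← mul_sub, norm_mul,
    norm_pow, Complex.norm_intCast, ← Complex.exp_int_mul]
  have hnode : |(interpolationNode j ℓ q : ℝ)| ≤ ℓ * (S + 2 * R) := by
    exact_mod_cast abs_interpolationNode_le hj q
  refine mul_le_mul (pow_le_pow_left₀ (abs_nonneg _) hnode _) ?_ (norm_nonneg _) (by positivity)
  have hexp : (((i.2 : ℤ) * (q.2 : ℤ) : ℤ) : ℂ) * (Complex.I * θ) =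
      Complex.I * ((i.2 : ℤ) * (q.2 : ℤ) * θ : ℝ) := by
    push_cast
    ring
  rw [hexp]
  refine (norm_exp_I_mul_sub_exp_I_mul_le _ _).trans ?_
  rw [← mul_sub, abs_mul, abs_mul]
  refine mul_le_mul_of_nonneg_right (mul_le_mul ?_ ?_ (abs_nonneg _) (by positivity)) (abs_nonneg _)
  · exact_mod_cast i.2.abs_le
  · exact_mod_cast q.2.abs_le

theorem prod_mul_pow_fst_mul (K c : ℕ) (x y : ℝ) :
    ∏ i : Fin K × SymmInterval c, (2 * (x ^ (i.1 : ℕ) * y)) =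
      (2 * y) ^ (K * (2 * c + 1)) * x ^ ((2 * c + 1) * K.choose 2) := by
  have hcomm (k : ℕ) : 2 * (x ^ k * y) = 2 * y * x ^ k := by ring
  simp_rw [hcomm, Fintype.prod_prod_type, Finset.prod_const, Finset.card_univ, SymmInterval.card,
    mul_pow _ (x ^ _), ← pow_mul]
  rw [Finset.prod_mul_distrib, Finset.prod_const, Finset.card_univ, Fintype.card_fin, ← pow_mul,
    Finset.prod_pow_eq_pow_sum, ← Finset.sum_mul, Fin.sum_univ_eq_sum_range fun n => n,
    Finset.sum_range_id, ← Nat.choose_two_right, mul_comm K, mul_comm (K.choose 2)]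

theorem norm_pi_div_mul_interpolationNode_le (hj : |j| ≤ ℓ) (hℓ : ℓ ≠ 0)
    (q : SymmInterval R × SymmInterval S) :
    ‖(Real.pi / ℓ * interpolationNode j ℓ q : ℂ)‖ ≤ Real.pi * (S + 2 * R) := by
  have hnode : |(interpolationNode j ℓ q : ℝ)| ≤ ℓ * (S + 2 * R) := by
    exact_mod_cast abs_interpolationNode_le hj q
  rw [norm_mul, norm_div, Complex.norm_intCast, Complex.norm_natCast, Complex.norm_real,
    Real.norm_eq_abs, abs_of_pos Real.pi_pos, div_mul_eq_mul_div, div_le_iff₀ (by positivity)]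
  nlinarith [Real.pi_pos]

theorem pow_mul_norm_interpolationMatrix_sub_le (hj : |j| ≤ ℓ) (hℓ : ℓ ≠ 0) {θ ρ : ℝ}
    (hρ : 1 ≤ ρ) {M : ℕ} (hθ : ρ ^ M * (c * S * |θ - Real.pi * j / ℓ|) ≤ 1)
    (i : Fin K × SymmInterval c) (q : SymmInterval R × SymmInterval S) :
    ρ ^ M * ‖interpolationMatrix (Complex.exp (Complex.I * θ)) j ℓ K c R S i q -
        interpolationFunction ℓ i.1 i.2 (Real.pi / ℓ * interpolationNode j ℓ q)‖ ≤
      (ℓ * (ρ * (S + 2 * R))) ^ (i.1 : ℕ) * Real.exp (c * (Real.pi * (ρ * (S + 2 * R)))) := by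
  have hexp : 1 ≤ Real.exp (c * (Real.pi * (ρ * (S + 2 * R)))) := Real.one_le_exp (by positivity)
  have hscale : (ℓ * (S + 2 * R) : ℝ) ≤ ℓ * (ρ * (S + 2 * R)) :=
    mul_le_mul_of_nonneg_left (le_mul_of_one_le_left (by positivity) hρ) (by positivity)
  calc ρ ^ M * _
      ≤ ρ ^ M * ((ℓ * (S + 2 * R)) ^ (i.1 : ℕ) * (c * S * |θ - Real.pi * j / ℓ|)) := by
        gcongr
        exact norm_interpolationMatrix_sub_le hj hℓ θ i q
    _ = (ℓ * (S + 2 * R)) ^ (i.1 : ℕ) * (ρ ^ M * (c * S * |θ - Real.pi * j / ℓ|)) := by ring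
    _ ≤ (ℓ * (ρ * (S + 2 * R))) ^ (i.1 : ℕ) * Real.exp (c * (Real.pi * (ρ * (S + 2 * R)))) := by
        gcongr
        exact hθ.trans hexp

theorem norm_det_interpolationMatrix_mul_pow_le (hg : Function.Injective g) (hj : IsCoprime j ℓ)
    (hjℓ : |j| ≤ ℓ) (hS : 2 * S + 1 ≤ ℓ) {θ ρ : ℝ} (hρ : 1 ≤ ρ)
    (hθ : ρ ^ (K * (2 * c + 1)) * (c * S * |θ - Real.pi * j / ℓ|) ≤ 1) :
    ‖((interpolationMatrix (Complex.exp (Complex.I * θ)) j ℓ K c R S).submatrix id g).det‖ *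
        ρ ^ (K * (2 * c + 1)).choose 2 ≤
      (K * (2 * c + 1)).factorial *
        ((2 * Real.exp (c * (Real.pi * (ρ * (S + 2 * R))))) ^ (K * (2 * c + 1)) *
          (ℓ * (ρ * (S + 2 * R))) ^ ((2 * c + 1) * K.choose 2)) := by
  have hℓ : ℓ ≠ 0 := by omega
  have hcard : Fintype.card (Fin K × SymmInterval c) = K * (2 * c + 1) := by
    rw [Fintype.card_prod, Fintype.card_fin, SymmInterval.card]
  let u (k : Fin K × SymmInterval c) : ℂ := Real.pi / ℓ * interpolationNode j ℓ (g k)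
  have hu : Function.Injective u := fun k k' h => hg <| interpolationNode_injective hj hS <|
    Int.cast_injective (α := ℂ) <| mul_left_cancel₀ (div_ne_zero
      (Complex.ofReal_ne_zero.mpr Real.pi_ne_zero) (Nat.cast_ne_zero.mpr hℓ)) h
  have hdet := norm_interpolation_det_mul_pow_le
    (f := fun i : Fin K × SymmInterval c => interpolationFunction ℓ i.1 i.2)
    (B := fun i => (ℓ * (ρ * (S + 2 * R))) ^ (i.1 : ℕ) *
      Real.exp (c * (Real.pi * (ρ * (S + 2 * R)))))
    (ε := fun i k => interpolationMatrix (Complex.exp (Complex.I * θ)) j ℓ K c R S i (g k) -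
      interpolationFunction ℓ i.1 i.2 (u k)) ?_ hu hρ ?_ ?_
  · simp only [hcard, add_sub_cancel, prod_mul_pow_fst_mul] at hdet
    exact hdet
  · intro i
    unfold interpolationFunction
    fun_prop
  · intro i k z hz
    refine norm_interpolationFunction_le ℓ i.1 i.2.abs_le ?_
    rw [norm_mul, hz, mul_left_comm]
    exact mul_le_mul_of_nonneg_left (norm_pi_div_mul_interpolationNode_le hjℓ hℓ (g k))
      (zero_le_one.trans hρ)
  · intro i k
    rw [hcard]
    exact pow_mul_norm_interpolationMatrix_sub_le hjℓ hℓ hρ hθ i (g k)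

end Bounds

theorem interpolation_inequality {O : Subring ℂ} (hO : ∀ x ∈ O, x ≠ 0 → 1 ≤ ‖x‖) {a b : ℂ}
    (ha0 : a ≠ 0) (hb0 : b ≠ 0) (ha : a ∈ O) (hb : b ∈ O) {θ : ℝ}
    (hab : a / b = Complex.exp (Complex.I * θ)) {K c R T : ℕ} (hj : IsCoprime j ℓ)
    (hjℓ : |j| ≤ ℓ) (hS : 2 * (T + c) + 1 ≤ ℓ)
    (hω : Function.Injective fun l : SymmInterval c => (a / b) ^ (l : ℤ))
    (hcard : (2 * c + 1) * (K - 1) < (2 * R + 1) * (2 * T + 1)) {ρ : ℝ} (hρ : 1 ≤ ρ)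
    (hθ : ρ ^ (K * (2 * c + 1)) * (c * (T + c : ℕ) * |θ - Real.pi * j / ℓ|) ≤ 1) :
    ρ ^ (K * (2 * c + 1)).choose 2 ≤ ‖a * b‖ ^ (c * (T + c) * (K * (2 * c + 1))) *
      ((K * (2 * c + 1)).factorial *
        ((2 * Real.exp (c * (Real.pi * (ρ * ((T + c : ℕ) + 2 * R))))) ^ (K * (2 * c + 1)) *
          (ℓ * (ρ * ((T + c : ℕ) + 2 * R))) ^ ((2 * c + 1) * K.choose 2))) := by
  obtain ⟨g, hg, hdet⟩ := exists_det_submatrix_ne_zero <|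
    linearIndependent_row_interpolationMatrix (div_ne_zero ha0 hb0) hω hj (by omega) hcard
  have hlower := one_le_pow_mul_norm_det_interpolationMatrix hO ha0 hb0 ha hb hdet
  have hupper := norm_det_interpolationMatrix_mul_pow_le hg hj hjℓ hS hρ hθ
  rw [← hab] at hupper
  calc ρ ^ (K * (2 * c + 1)).choose 2
      ≤ ‖a * b‖ ^ (c * (T + c) * (K * (2 * c + 1))) * _ * ρ ^ (K * (2 * c + 1)).choose 2 :=
        le_mul_of_one_le_left (by positivity) hlower
    _ ≤ _ := by
        rw [mul_assoc]
        exact mul_le_mul_of_nonneg_left hupper (by positivity)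

end InterpolationMatrix

section Parameters

variable {t : ℕ}

theorem mul_two_pow_eight_le_two_pow (ht : 20 ≤ t) :
    (21 + 2 * t) * (2 * t + 1) * 2 ^ 8 ≤ 2 ^ t := by
  induction t, ht using Nat.le_induction with
  | base => norm_num
  | succ t ht ih =>
    rw [pow_succ 2 t]
    nlinarith

theorem mul_two_mul_add_one_sq_le_two_pow (ht : 20 ≤ t) :
    246 * t * (2 * t + 1) ^ 2 + t + 15 ≤ 15 * 2 ^ t := by
  induction t, ht using Nat.le_induction with
  | base => norm_num
  | succ t ht ih =>
    obtain ⟨u, rfl⟩ := Nat.exists_eq_add_of_le ht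
    rw [pow_succ]
    refine le_trans ?_ ((Nat.mul_le_mul_right 2 ih).trans_eq (mul_assoc _ _ _))
    ring_nf
    linarith [Nat.zero_le u, Nat.zero_le (u ^ 2), Nat.zero_le (u ^ 3)]

theorem exp_eight_mul_pi_le_two_pow : Real.exp (8 * Real.pi) ≤ 2 ^ 37 := by
  rw [← Real.exp_log (by positivity : (0 : ℝ) < 2 ^ 37), Real.exp_le_exp, Real.log_pow,
    Nat.cast_ofNat]
  linarith [Real.pi_lt_d2, Real.log_two_gt_d9]

theorem two_mul_choose_two (n : ℕ) : 2 * n.choose 2 = n * (n - 1) := by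
  rw [Nat.choose_two_right, Nat.mul_div_cancel' (Nat.even_mul_pred_self n).two_dvd]

variable {R K M Y : ℕ} (ht : 20 ≤ t) (hR : R = t * (2 * t + 1)) (hK : K = 82 * R)
  (hM : M = K * (2 * t + 1)) (hY : Y = 41 * t + 20 + t + 2 * R)

include ht hR

include hY in
theorem mul_eight_mul_le_two_pow {ℓ : ℕ} (hℓ : ℓ ≤ 2 ^ (t + 1)) :
    ℓ * (8 * Y) ≤ 2 ^ (2 * t - 4) := by
  have hYt : Y * 2 ^ 8 ≤ 2 ^ t :=
    (Nat.mul_le_mul_right _ (by rw [hY, hR]; nlinarith)).trans (mul_two_pow_eight_le_two_pow ht)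
  refine Nat.le_of_mul_le_mul_right (c := 2 ^ 8) ?_ (by positivity)
  calc ℓ * (8 * Y) * 2 ^ 8 = ℓ * (Y * 2 ^ 8) * 2 ^ 3 := by ring
    _ ≤ 2 ^ (t + 1) * 2 ^ t * 2 ^ 3 := by gcongr
    _ = 2 ^ (2 * t - 4) * 2 ^ 8 := by
      rw [← pow_add, ← pow_add, ← pow_add]
      congr 1
      omega

include hK hM

theorem factorial_le_two_pow : M.factorial ≤ 2 ^ (2 * t * M) := by
  have hMt : M ≤ 2 ^ (2 * t) := by
    have ht' : 2 ^ 20 ≤ 2 ^ t := Nat.pow_le_pow_right (by norm_num) ht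
    have hsize := mul_two_mul_add_one_sq_le_two_pow ht
    rw [hM, hK, hR, two_mul, pow_add]
    nlinarith
  rw [pow_mul]
  exact (Nat.factorial_le_pow M).trans (Nat.pow_le_pow_left hMt M)

include hY

theorem interpolation_exponent_lt :
    2 * t * (t * (41 * t + 20 + t) * M) + (2 * t * M + ((1 + 37 * (t * Y)) * M +
      (2 * t - 4) * ((2 * t + 1) * K.choose 2))) < 3 * M.choose 2 := by
  obtain ⟨u, rfl⟩ := Nat.exists_eq_add_of_le ht
  have hMpos : 0 < M := by rw [hM, hK, hR]; positivity
  have hmain : 4 * (20 + u) * ((20 + u) * (41 * (20 + u) + 20 + (20 + u))) + 4 * (20 + u) +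
      2 * (1 + 37 * ((20 + u) * Y)) + (2 * (20 + u) - 4) * (K - 1) < 3 * (M - 1) := by
    have hle : (2 * (20 + u) - 4) * (K - 1) ≤ (36 + 2 * u) * K := by gcongr <;> omega
    have hlt : 4 * (20 + u) * ((20 + u) * (41 * (20 + u) + 20 + (20 + u))) + 4 * (20 + u) +
        2 * (1 + 37 * ((20 + u) * Y)) + (36 + 2 * u) * K + 3 < 3 * M := by
      rw [hM, hY, hK, hR]
      ring_nf
      linarith [Nat.zero_le u, Nat.zero_le (u ^ 2), Nat.zero_le (u ^ 3)]
    omega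
  have hscaled := mul_lt_mul_of_pos_left hmain hMpos
  have hKchoose : (2 * (20 + u) - 4) * (2 * ((2 * (20 + u) + 1) * K.choose 2)) =
      M * ((2 * (20 + u) - 4) * (K - 1)) := by
    rw [mul_left_comm 2, two_mul_choose_two, hM]
    ring
  have hMchoose := two_mul_choose_two M
  generalize 2 * (20 + u) - 4 = a, K - 1 = k, M - 1 = m at *
  linarith

theorem interpolation_parameters_lt {ℓ : ℕ} (hℓ : ℓ ≤ 2 ^ (t + 1)) {N : ℝ} (hN0 : 0 ≤ N)
    (hN : N ≤ 2 ^ (2 * t)) :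
    N ^ (t * (41 * t + 20 + t) * M) * (M.factorial *
      ((2 * Real.exp (t * (Real.pi * (8 * Y)))) ^ M *
        (ℓ * (8 * Y)) ^ ((2 * t + 1) * K.choose 2))) < 8 ^ M.choose 2 := by
  have hexp : 2 * Real.exp (t * (Real.pi * (8 * Y))) ≤ 2 ^ (1 + 37 * (t * Y)) := by
    have hmul : (t : ℝ) * (Real.pi * (8 * Y)) = (t * Y : ℕ) * (8 * Real.pi) := by
      push_cast
      ring
    rw [hmul, Real.exp_nat_mul, pow_add, pow_one, pow_mul 2 37]
    gcongr
    exact exp_eight_mul_pi_le_two_pow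
  have hℓY : (ℓ * (8 * Y) : ℝ) ≤ 2 ^ (2 * t - 4) := by
    exact_mod_cast mul_eight_mul_le_two_pow ht hR hY hℓ
  have hfact : (M.factorial : ℝ) ≤ 2 ^ (2 * t * M) := by
    exact_mod_cast factorial_le_two_pow ht hR hK hM
  calc _ ≤ ((2 : ℝ) ^ (2 * t)) ^ (t * (41 * t + 20 + t) * M) * (2 ^ (2 * t * M) *
        ((2 ^ (1 + 37 * (t * Y))) ^ M * (2 ^ (2 * t - 4)) ^ ((2 * t + 1) * K.choose 2))) := by
        gcongr
    _ = 2 ^ (2 * t * (t * (41 * t + 20 + t) * M) + (2 * t * M + ((1 + 37 * (t * Y)) * M +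
        (2 * t - 4) * ((2 * t + 1) * K.choose 2)))) := by
        simp only [← pow_mul, ← pow_add]
    _ < 2 ^ (3 * M.choose 2) :=
        pow_lt_pow_right₀ one_lt_two (interpolation_exponent_lt ht hR hK hM hY)
    _ = 8 ^ M.choose 2 := by rw [pow_mul]; norm_num

end Parameters

section RealPartsOfPowers

open Complex

theorem exists_int_abs_sub_mul_pi_le (x : ℝ) :
    ∃ m : ℤ, |x - (m + 1 / 2) * Real.pi| ≤ Real.pi / 2 * |Real.cos x| := by
  have hπ := Real.pi_pos
  obtain ⟨m, hm⟩ : ∃ m, m = ⌊x / Real.pi⌋ := ⟨_, rfl⟩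
  obtain ⟨hle, hlt⟩ := Int.floor_eq_iff.mp hm.symm
  rw [le_div_iff₀ hπ] at hle
  rw [div_lt_iff₀ hπ] at hlt
  obtain ⟨δ, hδ⟩ : ∃ δ, δ = x - (m + 1 / 2) * Real.pi := ⟨_, rfl⟩
  have hδle : |δ| ≤ Real.pi / 2 := by
    rw [_root_.abs_le]
    constructor <;> linarith
  have hcos : |Real.cos x| = |Real.sin δ| := by
    rw [show x = δ + Real.pi / 2 + m * Real.pi by rw [hδ]; ring, Real.cos_add_int_mul_pi,
      Real.cos_add_pi_div_two, abs_mul, abs_neg_one_zpow, one_mul, abs_neg]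
  refine ⟨m, ?_⟩
  rw [← hδ, hcos]
  have hsin := Real.mul_abs_le_abs_sin hδle
  rw [div_mul_eq_mul_div, div_le_iff₀ hπ] at hsin
  linarith

theorem exists_odd_abs_two_mul_sub_le {ℓ : ℕ} (hodd : Odd ℓ) (hℓ : 4 ≤ ℓ) {φ : ℝ}
    (hφ : |φ| ≤ Real.pi / 2) :
    ∃ j : ℤ, Odd j ∧ |j| ≤ ℓ ∧ |2 * φ - Real.pi * j / ℓ| ≤ |Real.cos (ℓ * φ)| := by
  have hπ := Real.pi_pos
  have hℓπ : Real.pi ≤ ℓ := Real.pi_le_four.trans (by exact_mod_cast hℓ)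
  have hℓ0 : (0 : ℝ) < ℓ := hπ.trans_le hℓπ
  obtain ⟨m, hm⟩ := exists_int_abs_sub_mul_pi_le (ℓ * φ)
  refine ⟨2 * m + 1, odd_two_mul_add_one m, ?_, ?_⟩
  · have hlt : |((2 * m + 1 : ℤ) : ℝ)| ≤ ((ℓ + 1 : ℤ) : ℝ) := by
      have htri : |(m + 1 / 2) * Real.pi| ≤ ℓ * (Real.pi / 2) + Real.pi / 2 * 1 :=
        calc |(m + 1 / 2) * Real.pi| = |ℓ * φ - (ℓ * φ - (m + 1 / 2) * Real.pi)| := by ring_nf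
          _ ≤ |ℓ * φ| + |ℓ * φ - (m + 1 / 2) * Real.pi| := abs_sub _ _
          _ ≤ ℓ * (Real.pi / 2) + Real.pi / 2 * 1 := by
            rw [abs_mul, Nat.abs_cast]
            gcongr
            exact hm.trans (by gcongr; exact Real.abs_cos_le_one _)
      have habs : |((2 * m + 1 : ℤ) : ℝ)| * (Real.pi / 2) = |(m + 1 / 2) * Real.pi| := by
        rw [show (m + 1 / 2) * Real.pi = ((2 * m + 1 : ℤ) : ℝ) * (Real.pi / 2) by push_cast; ring,
          abs_mul, abs_of_pos (half_pos hπ)]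
      refine le_of_mul_le_mul_right ?_ (half_pos hπ)
      rw [habs]
      push_cast
      linarith
    have hle : |2 * m + 1| ≤ (ℓ + 1 : ℤ) := by exact_mod_cast hlt
    obtain ⟨k, rfl⟩ := hodd
    rw [_root_.abs_le] at hle ⊢
    push_cast at hle ⊢
    omega
  · have hscale : 2 * φ - Real.pi * ((2 * m + 1 : ℤ) : ℝ) / ℓ =
        2 / ℓ * (ℓ * φ - (m + 1 / 2) * Real.pi) := by
      push_cast
      field_simp
    rw [hscale, abs_mul, abs_of_pos (by positivity)]
    calc 2 / ℓ * |ℓ * φ - (m + 1 / 2) * Real.pi|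
        ≤ 2 / ℓ * (Real.pi / 2 * |Real.cos (ℓ * φ)|) := by gcongr
      _ = Real.pi / ℓ * |Real.cos (ℓ * φ)| := by ring
      _ ≤ |Real.cos (ℓ * φ)| :=
        mul_le_of_le_one_left (abs_nonneg _) ((div_le_one hℓ0).mpr hℓπ)

theorem re_pow_eq_norm_pow_mul_cos (x : ℂ) (n : ℕ) :
    (x ^ n).re = ‖x‖ ^ n * Real.cos (n * arg x) := by
  rw [show x ^ n = ((‖x‖ ^ n : ℝ) : ℂ) * exp ((n * arg x : ℝ) * I) by
    conv_lhs => rw [← norm_mul_exp_arg_mul_I x, mul_pow, ← exp_nat_mul]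
    push_cast
    ring_nf, re_ofReal_mul, exp_ofReal_mul_I_re]

theorem div_conj_eq_exp {x : ℂ} (hx : x ≠ 0) :
    x / starRingEnd ℂ x = exp (I * (2 * arg x : ℝ)) := by
  have hconj : starRingEnd ℂ x = ‖x‖ * exp (-(arg x * I)) := by
    conv_lhs => rw [← norm_mul_exp_arg_mul_I x]
    rw [map_mul, conj_ofReal, ← exp_conj, map_mul, conj_ofReal, conj_I, mul_neg]
  rw [div_eq_iff ((map_ne_zero _).mpr hx), hconj, mul_left_comm, ← exp_add]
  conv_lhs => rw [← norm_mul_exp_arg_mul_I x]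
  push_cast
  ring_nf

theorem cos_le_pi_div_two_sub_abs {φ : ℝ} (hφ : |φ| ≤ Real.pi / 2) :
    Real.cos φ ≤ Real.pi / 2 - |φ| := by
  rw [← Real.cos_abs, ← Real.sin_pi_div_two_sub]
  exact Real.sin_le (sub_nonneg.mpr hφ)

theorem exists_isCoprime_norm_pow_mul_abs_two_mul_arg_sub_le {x : ℂ} (hre : 1 ≤ x.re) {ℓ : ℕ}
    (hℓ : ℓ.Prime) (hℓ4 : 4 ≤ ℓ) (hx : |(x ^ ℓ).re| ≤ ‖x‖) :
    ∃ j : ℤ, IsCoprime j ℓ ∧ |j| ≤ ℓ ∧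
      ‖x‖ ^ (ℓ - 1) * |2 * arg x - Real.pi * j / ℓ| ≤ 1 := by
  have hnorm : 1 ≤ ‖x‖ := hre.trans ((le_abs_self _).trans (abs_re_le_norm x))
  have hφ : |arg x| ≤ Real.pi / 2 := abs_arg_le_pi_div_two_iff.mpr (by linarith)
  obtain ⟨j, hjodd, hjℓ, hj⟩ :=
    exists_odd_abs_two_mul_sub_le (hℓ.odd_of_ne_two (by omega)) hℓ4 hφ
  have hclose : ‖x‖ ^ (ℓ - 1) * |2 * arg x - Real.pi * j / ℓ| ≤ 1 := by
    refine (mul_le_mul_of_nonneg_left hj (by positivity)).trans ?_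
    rw [re_pow_eq_norm_pow_mul_cos, abs_mul, abs_of_pos (by positivity),
      ← Nat.sub_add_cancel hℓ.one_le, pow_succ', mul_assoc, Nat.sub_add_cancel hℓ.one_le] at hx
    exact le_of_mul_le_mul_left (hx.trans_eq (mul_one _).symm) (by linarith)
  have hjlt : |j| < ℓ := by
    refine lt_of_le_of_ne hjℓ fun hj_eq => absurd hclose (not_le.mpr ?_)
    have hj_eq' : |Real.pi * j / ℓ| = Real.pi := by
      rw [abs_div, abs_mul, ← Int.cast_abs, hj_eq, abs_of_pos Real.pi_pos, Nat.abs_cast,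
        Int.cast_natCast, mul_div_cancel_right₀ _ (by exact_mod_cast hℓ.ne_zero)]
    have hcos : 2 * Real.cos (arg x) ≤ |2 * arg x - Real.pi * j / ℓ| := by
      have hle := abs_sub_abs_le_abs_sub (Real.pi * j / ℓ) (2 * arg x)
      rw [hj_eq', abs_mul, abs_two, abs_sub_comm] at hle
      linarith [cos_le_pi_div_two_sub_abs hφ]
    calc 1 < 2 * x.re := by linarith
      _ = ‖x‖ * (2 * Real.cos (arg x)) := by rw [← norm_mul_cos_arg x]; ring
      _ ≤ ‖x‖ ^ (ℓ - 1) * |2 * arg x - Real.pi * j / ℓ| :=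
        mul_le_mul (le_self_pow₀ hnorm (by omega)) hcos
          (mul_nonneg zero_le_two (Real.cos_nonneg_of_neg_pi_div_two_le_of_le
            (_root_.abs_le.mp hφ).1 (_root_.abs_le.mp hφ).2)) (by positivity)
  have hℓj : ¬ (ℓ : ℤ) ∣ j := fun hdvd => by
    have hj0 := Int.eq_zero_of_abs_lt_dvd hdvd hjlt
    simp [hj0] at hjodd
  exact ⟨j, ((Nat.prime_iff_prime_int.mp hℓ).coprime_iff_not_dvd.mpr hℓj).symm, hjℓ, hclose⟩

theorem injective_exp_I_mul_zpow {j : ℤ} {ℓ c : ℕ} (hj : IsCoprime j ℓ) (hc : 2 * c < ℓ) {θ : ℝ}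
    (hθ : c * ℓ * |θ - Real.pi * j / ℓ| < 1) :
    Function.Injective fun l : SymmInterval c => exp (I * θ) ^ (l : ℤ) := by
  have hℓ0 : (0 : ℝ) < ℓ := by exact_mod_cast (by omega : 0 < ℓ)
  intro l l' hll'
  simp only [← exp_int_mul] at hll'
  obtain ⟨n, hn⟩ := exp_eq_exp_iff_exists_int.mp hll'
  obtain ⟨e, he⟩ : ∃ e : ℤ, e = l - l' := ⟨_, rfl⟩
  have heθ : e * θ = n * (2 * Real.pi) := by
    have hI : I * (e * θ) = I * (n * (2 * Real.pi)) := by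
      rw [he]
      push_cast
      linear_combination hn
    exact_mod_cast mul_left_cancel₀ I_ne_zero hI
  have hec : |e| ≤ 2 * c := by
    have hsub := abs_sub (l : ℤ) l'
    have hl := l.abs_le
    have hl' := l'.abs_le
    rw [he]
    linarith
  have hsmall : |((2 * n * ℓ - j * e : ℤ) : ℝ)| < 1 := by
    have hfactor : ((2 * n * ℓ - j * e : ℤ) : ℝ) =
        e * (ℓ / Real.pi) * (θ - Real.pi * j / ℓ) := by
      push_cast
      field_simp
      linear_combination (-(ℓ : ℝ)) * heθ
    have hecR : |(e : ℝ)| ≤ 2 * c := by exact_mod_cast hec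
    rw [hfactor, abs_mul, abs_mul, abs_of_pos (show 0 < ℓ / Real.pi by positivity)]
    refine lt_of_le_of_lt (mul_le_mul_of_nonneg_right ?_ (abs_nonneg _)) hθ
    calc |(e : ℝ)| * (ℓ / Real.pi) ≤ 2 * c * (ℓ / 2) := by
          gcongr
          exact Real.two_le_pi
      _ = c * ℓ := by ring
  have hzero : 2 * n * ℓ - j * e = 0 := Int.abs_lt_one_iff.mp (by exact_mod_cast hsmall)
  have hdvd : (ℓ : ℤ) ∣ e := hj.symm.dvd_of_dvd_mul_left ⟨2 * n, by linear_combination -hzero⟩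
  have he0 := Int.eq_zero_of_abs_lt_dvd hdvd (by omega)
  exact Subtype.ext (by omega)

section DiscreteSubring

variable {O : Subring ℂ} (hO : ∀ x ∈ O, x ≠ 0 → 1 ≤ ‖x‖)
include hO

theorem one_lt_two_pow_mul_abs_arg_sub {a b : ℂ} (ha0 : a ≠ 0) (hb0 : b ≠ 0) (ha : a ∈ O)
    (hb : b ∈ O) {θ : ℝ} (hab : a / b = exp (I * θ)) {t ℓ : ℕ} (ht : 20 ≤ t) (htℓ : 2 ^ t ≤ ℓ)
    (hℓt : ℓ ≤ 2 ^ (t + 1)) (habt : ‖a * b‖ ≤ 2 ^ (2 * t)) {j : ℤ} (hj : IsCoprime j ℓ)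
    (hjℓ : |j| ≤ ℓ) :
    1 < 2 ^ (246 * t * (2 * t + 1) ^ 2 + t) * |θ - Real.pi * j / ℓ| := by
  by_contra! hclose
  obtain ⟨R, hR⟩ : ∃ R, R = t * (2 * t + 1) := ⟨_, rfl⟩
  obtain ⟨K, hK⟩ : ∃ K, K = 82 * R := ⟨_, rfl⟩
  obtain ⟨M, hM⟩ : ∃ M, M = K * (2 * t + 1) := ⟨_, rfl⟩
  rw [show 246 * t * (2 * t + 1) ^ 2 = 3 * M by rw [hM, hK, hR]; ring] at hclose
  have h2t := mul_two_pow_eight_le_two_pow ht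
  have hclose_of_le {x : ℝ} (hx : x ≤ 2 ^ (3 * M + t)) : x * |θ - Real.pi * j / ℓ| ≤ 1 :=
    (mul_le_mul_of_nonneg_right hx (abs_nonneg _)).trans hclose
  have hω : Function.Injective fun l : SymmInterval t => (a / b) ^ (l : ℤ) := by
    rw [hab]
    refine injective_exp_I_mul_zpow hj (by nlinarith) ?_
    have hle : 2 * t * ℓ ≤ 2 ^ (3 * M + t) :=
      calc 2 * t * ℓ ≤ 2 ^ t * 2 ^ (t + 1) := by gcongr; nlinarith
        _ = 2 ^ (t + 1 + t) := by ring
        _ ≤ 2 ^ (3 * M + t) := by gcongr <;> nlinarith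
    linarith [hclose_of_le (x := 2 * t * ℓ) (by exact_mod_cast hle)]
  have hθ : (8 : ℝ) ^ M * (t * (41 * t + 20 + t : ℕ) * |θ - Real.pi * j / ℓ|) ≤ 1 := by
    rw [← mul_assoc]
    refine hclose_of_le ?_
    rw [pow_add, pow_mul]
    norm_num only
    gcongr
    exact_mod_cast (by nlinarith : t * (41 * t + 20 + t) ≤ 2 ^ t)
  have hcard : (2 * t + 1) * (K - 1) < (2 * R + 1) * (2 * (41 * t + 20) + 1) :=
    calc (2 * t + 1) * (K - 1) < (2 * t + 1) * ((2 * R + 1) * 41) := by gcongr; omega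
      _ = _ := by ring
  have hle := interpolation_inequality hO ha0 hb0 ha hb hab hj hjℓ (T := 41 * t + 20)
    (by nlinarith) hω hcard (by norm_num : (1 : ℝ) ≤ 8) (by rwa [← hM])
  have hlt := interpolation_parameters_lt ht hR hK hM rfl hℓt (norm_nonneg (a * b)) habt
  push_cast [← hM] at hle hlt
  linarith

theorem norm_lt_abs_re_pow {x : ℂ} (hx : x ∈ O) (hx' : starRingEnd ℂ x ∈ O) (hre : 1 ≤ x.re)
    (hnorm : 2 ^ 15 ≤ ‖x‖) {ℓ : ℕ} (hℓ : ℓ.Prime) (hℓ20 : 2 ^ 20 ≤ ℓ) (hnormℓ : 2 * ‖x‖ ≤ ℓ) :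
    ‖x‖ < |(x ^ ℓ).re| := by
  by_contra! hsmall
  obtain ⟨j, hj, hjℓ, hclose⟩ :=
    exists_isCoprime_norm_pow_mul_abs_two_mul_arg_sub_le hre hℓ (by omega) hsmall
  have hx0 : x ≠ 0 := by
    rintro rfl
    norm_num at hre
  obtain ⟨t, ht⟩ : ∃ t, t = Nat.log 2 ℓ := ⟨_, rfl⟩
  have ht20 : 20 ≤ t := ht ▸ (Nat.le_log_iff_pow_le one_lt_two (by omega)).mpr hℓ20
  have htℓ : 2 ^ t ≤ ℓ := ht ▸ Nat.pow_log_le_self 2 (by omega)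
  have hℓt : ℓ ≤ 2 ^ (t + 1) := ht ▸ (Nat.lt_pow_succ_log_self one_lt_two ℓ).le
  have hnormt : ‖x‖ ≤ 2 ^ t := by
    have hℓt' : (ℓ : ℝ) ≤ 2 ^ (t + 1) := by exact_mod_cast hℓt
    rw [pow_succ] at hℓt'
    linarith
  refine absurd ((one_lt_two_pow_mul_abs_arg_sub hO hx0 ((map_ne_zero _).mpr hx0) hx hx'
    (div_conj_eq_exp hx0) ht20 htℓ hℓt ?_ hj hjℓ).trans_le
    (mul_le_mul_of_nonneg_right ?_ (abs_nonneg _))) (not_lt.mpr hclose)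
  · calc ‖x * starRingEnd ℂ x‖ = ‖x‖ ^ 2 := by rw [norm_mul, norm_conj, sq]
      _ ≤ (2 ^ t) ^ 2 := by gcongr
      _ = 2 ^ (2 * t) := by rw [← pow_mul, mul_comm]
  · have hexponent := mul_two_mul_add_one_sq_le_two_pow ht20
    calc (2 : ℝ) ^ (246 * t * (2 * t + 1) ^ 2 + t) ≤ 2 ^ (15 * (ℓ - 1)) := by
          gcongr
          · exact one_le_two
          · omega
      _ = (2 ^ 15) ^ (ℓ - 1) := pow_mul _ _ _
      _ ≤ ‖x‖ ^ (ℓ - 1) := by gcongr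

end DiscreteSubring

/-- The embedding `ℤ√d → ℂ` for `d ≤ 0` which sends `√d` to the square root of `d` in the closed
upper half-plane. -/
noncomputable def zsqrtdToComplex {d : ℤ} (hd : d ≤ 0) : ℤ√d →+* ℂ :=
  Zsqrtd.lift ⟨√(-d : ℝ) * I, by
    have hsq : ((√(-d : ℝ) : ℝ) : ℂ) ^ 2 = -d := by
      exact_mod_cast Real.sq_sqrt (neg_nonneg.mpr (Int.cast_nonpos.mpr hd))
    linear_combination I ^ 2 * hsq - d * I_sq⟩

section ZsqrtdToComplex

variable {d : ℤ} (hd : d ≤ 0)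

theorem zsqrtdToComplex_re (z : ℤ√d) : (zsqrtdToComplex hd z).re = z.re := by
  simp [zsqrtdToComplex]

theorem zsqrtdToComplex_star (z : ℤ√d) :
    zsqrtdToComplex hd (star z) = starRingEnd ℂ (zsqrtdToComplex hd z) := by
  simp [zsqrtdToComplex]

theorem norm_zsqrtdToComplex_sq (z : ℤ√d) : ‖zsqrtdToComplex hd z‖ ^ 2 = z.norm := by
  have hmul : zsqrtdToComplex hd z * starRingEnd ℂ (zsqrtdToComplex hd z) = (z.norm : ℂ) := by
    rw [← zsqrtdToComplex_star, ← map_mul, ← Zsqrtd.norm_eq_mul_conj, map_intCast]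
  rw [mul_conj'] at hmul
  exact_mod_cast hmul

theorem one_le_norm_of_mem_range_zsqrtdToComplex {x : ℂ} (hx : x ∈ (zsqrtdToComplex hd).range)
    (hx0 : x ≠ 0) : 1 ≤ ‖x‖ := by
  obtain ⟨z, rfl⟩ := hx
  rw [← one_le_sq_iff₀ (norm_nonneg _), norm_zsqrtdToComplex_sq]
  have hpos : (0 : ℝ) < z.norm := by
    rw [← norm_zsqrtdToComplex_sq hd]
    positivity
  exact_mod_cast Int.cast_pos.mp hpos

end ZsqrtdToComplex

theorem zsqrtd_norm_lt_re_pow_sq {d : ℤ} (hd : d ≤ 0) {z : ℤ√d} (hre : z.re ≠ 0)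
    (hnorm : 2 ^ 30 ≤ z.norm) {ℓ : ℕ} (hℓ : ℓ.Prime) (hℓ20 : 2 ^ 20 ≤ ℓ)
    (hnormℓ : 4 * z.norm ≤ ℓ ^ 2) : z.norm < (z ^ ℓ).re ^ 2 := by
  wlog hpos : 0 < z.re generalizing z
  · have hneg := this (z := -z) (by simpa using hre) (by simpa using hnorm) (by simpa using hnormℓ)
      (by simpa using lt_of_le_of_ne (not_lt.mp hpos) hre)
    rw [(hℓ.odd_of_ne_two (by omega)).neg_pow] at hneg
    simpa using hneg
  obtain ⟨x, hx⟩ : ∃ x, x = zsqrtdToComplex hd z := ⟨_, rfl⟩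
  have hsq : ‖x‖ ^ 2 = z.norm := hx ▸ norm_zsqrtdToComplex_sq hd z
  have hlt : ‖x‖ < |(x ^ ℓ).re| := by
    refine norm_lt_abs_re_pow (fun _ => one_le_norm_of_mem_range_zsqrtdToComplex hd) ⟨z, hx.symm⟩
      ⟨star z, by rw [zsqrtdToComplex_star, hx]⟩ ?_ ?_ hℓ hℓ20 ?_
    · rw [hx, zsqrtdToComplex_re]
      exact_mod_cast hpos
    · rw [← sq_le_sq₀ (by positivity) (norm_nonneg _), hsq, ← pow_mul]
      exact_mod_cast hnorm
    · rw [← sq_le_sq₀ (by positivity) (by positivity), mul_pow, hsq]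
      norm_num only
      exact_mod_cast hnormℓ
  rw [← sq_lt_sq₀ (norm_nonneg _) (abs_nonneg _), sq_abs, hsq, hx, ← map_pow,
    zsqrtdToComplex_re] at hlt
  exact_mod_cast hlt

end RealPartsOfPowers

section TwicePrimeRealParts

variable {d : ℤ} {p h q n : ℕ} {z : ℤ√d}

theorem two_mul_re_pow_modEq (z : ℤ√d) (hn : n ≠ 0) :
    (2 * z.re) ^ (2 * n) ≡ (2 * (z ^ n).re) ^ 2 [ZMOD z.norm] := by
  rw [mul_comm 2 n, pow_mul]
  exact (Int.modEq_iff_dvd.mpr (norm_dvd_two_mul_re_pow_sub z hn)).symm.pow 2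

theorem abs_re_eq_two_or_of_abs_re_pow_eq (hnorm : Odd z.norm) (hn : Odd n) (hq : q.Prime)
    (hre : |(z ^ n).re| = 2 * q) : |z.re| = 2 ∨ |z.re| = 2 * q := by
  have heven : Even (z ^ n).re := even_abs.mp (hre ▸ even_two_mul _)
  have hzeven : Even z.re := Int.not_odd_iff_even.mp fun hodd =>
    Int.not_odd_iff_even.mpr heven (odd_re_pow_of_odd_re hnorm hodd n)
  obtain ⟨c, hc⟩ := hzeven.two_dvd
  have hcq : c ∣ q := by
    have hdvd := re_dvd_re_pow z hn
    rw [← dvd_abs, hre, hc] at hdvd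
    exact (mul_dvd_mul_iff_left two_ne_zero).mp hdvd
  rw [hc, abs_mul, abs_two, Int.abs_eq_natAbs]
  exact ((Nat.dvd_prime hq).mp (Int.natAbs_dvd_natAbs.mpr hcq)).imp (fun h1 => by simp [h1])
    fun h1 => by simp [h1]

theorem IsPrimitive.two_mul_pow_dvd_sub_one (hp : p.Prime) (hp2 : p ≠ 2)
    (hz : IsPrimitive p (h + 1) z) (hnw : ¬ IsWieferich p (2 * z.re)) (hn : Odd n)
    (hre : |(z ^ n).re| = |z.re|) : 2 * p ^ h ∣ n - 1 := by
  have hP : Prime (p : ℤ) := Nat.prime_iff_prime_int.mp hp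
  have hp2re : ¬ (p : ℤ) ∣ 2 * z.re := fun hdvd => (hP.dvd_or_dvd hdvd).elim
    (fun h2 => hp2 ((Nat.prime_dvd_prime_iff_eq hp Nat.prime_two).mp (by exact_mod_cast h2)))
    hz.not_dvd_re
  obtain ⟨k, rfl⟩ := hn
  have hcongr := two_mul_re_pow_modEq (n := 2 * k + 1) z (by omega)
  rw [mul_pow 2 (z ^ _).re, sq_eq_sq_iff_abs_eq_abs _ _ |>.mpr hre, ← mul_pow, hz.norm_eq,
    Int.modEq_comm, Int.modEq_iff_dvd, show (2 * z.re) ^ (2 * (2 * k + 1)) - (2 * z.re) ^ 2 =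
      (2 * z.re) ^ 2 * ((2 * z.re) ^ (4 * k) - 1) by ring] at hcongr
  have hdvd : (p : ℤ) ^ (h + 1) ∣ (2 * z.re) ^ (4 * k) - 1 :=
    (hP.coprime_iff_not_dvd.mpr hp2re).pow.dvd_of_dvd_mul_left hcongr
  have h4 := pow_dvd_of_pow_modEq_one hp hp2 hnw (Int.modEq_iff_dvd.mpr hdvd).symm
  have hcop : Nat.Coprime (p ^ h) 4 :=
    ((Nat.coprime_primes hp Nat.prime_two).mpr hp2).pow h 2
  exact mul_dvd_mul_left 2 (hcop.dvd_of_dvd_mul_left h4)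

theorem two_pow_le_pow_of_two_mul_sq_le (hp : p.Prime) (hmod : p % 4 = 1)
    (hw : IsWieferich p 2) (hq : q.Prime) (hqp : q ∣ p - 2) (hh : h ≠ 0)
    (hle : (2 * q) ^ 2 ≤ p ^ (h + 1)) : 2 ^ 19 ≤ p ^ h ∧ 2 ^ 30 ≤ p ^ (h + 1) := by
  rcases lt_or_ge p (2 ^ 19) with hlt | hge
  · obtain rfl : p = 1093 :=
      (eq_one_or_eq_1093_of_two_pow_modEq hmod hlt (isWieferich_natCast.mp hw)).resolve_left
        hp.ne_one
    have hq1091 : q = 1091 := (Nat.prime_dvd_prime_iff_eq hq (by norm_num)).mp hqp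
    have hh1 : h ≠ 1 := by
      rintro rfl
      norm_num [hq1091] at hle
    have hh2 : 2 ≤ h := by omega
    constructor
    · calc 2 ^ 19 ≤ 1093 ^ 2 := by norm_num
        _ ≤ 1093 ^ h := Nat.pow_le_pow_right (by norm_num) hh2
    · calc 2 ^ 30 ≤ 1093 ^ 3 := by norm_num
        _ ≤ 1093 ^ (h + 1) := Nat.pow_le_pow_right (by norm_num) (by omega)
  · constructor
    · exact hge.trans (Nat.le_self_pow hh p)
    · calc 2 ^ 30 ≤ (2 ^ 19) ^ 2 := by norm_num
        _ ≤ p ^ 2 := by gcongr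
        _ ≤ p ^ (h + 1) := Nat.pow_le_pow_right hp.pos (by omega)

theorem re_sq_le_norm (hd : d ≤ 0) (z : ℤ√d) : z.re ^ 2 ≤ z.norm := by
  rw [zsqrtd_norm_eq]
  nlinarith [sq_nonneg z.im]

variable (hp : p.Prime) (hmod : p % 4 = 1) (hw : IsWieferich p 2) (hq : q.Prime)
  (hqp : q ∣ p - 2) (hqw : ¬ IsWieferich p q)
include hp hmod hw hq hqp hqw

theorem IsPrimitive.abs_re_pow_ne_two_mul_prime (hd : d ≤ 0) (hh : h ≠ 0)
    (hz : IsPrimitive p (h + 1) z) {ℓ : ℕ} (hℓ : ℓ.Prime) : |(z ^ ℓ).re| ≠ 2 * q := by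
  intro hre
  have hp_odd : Odd p := Nat.odd_iff.mpr (by omega)
  have hnorm_odd : Odd z.norm := hz.norm_eq ▸ ((Int.odd_coe_nat p).mpr hp_odd).pow
  have hℓ_odd : Odd ℓ := Nat.not_even_iff_odd.mp fun heven =>
    Int.not_odd_iff_even.mpr (even_abs.mp (hre ▸ even_two_mul _))
      (odd_re_pow_of_even hnorm_odd heven)
  have hnot_wieferich {a : ℤ} (ha : a ^ 2 ≡ (2 * (2 * q)) ^ 2 [ZMOD p ^ 2]) : ¬ IsWieferich p a :=
    fun haw => hqw (hw.of_mul_left (hw.of_mul_left (haw.of_sq_modEq hp_odd ha)))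
  rcases abs_re_eq_two_or_of_abs_re_pow_eq hnorm_odd hℓ_odd hq hre with habs | habs
  · have hcongr : ((2 ^ 2) ^ ℓ) ^ 2 ≡ (2 * (2 * q)) ^ 2 [ZMOD p ^ (h + 1)] := by
      have h2re := two_mul_re_pow_modEq z hℓ.ne_zero
      rwa [mul_pow 2 (z ^ ℓ).re, ← sq_abs (z ^ ℓ).re, hre, ← mul_pow, pow_mul, mul_pow 2 z.re,
        ← sq_abs z.re, habs, ← sq (2 ^ 2 : ℤ), pow_right_comm, hz.norm_eq] at h2re
    exact hnot_wieferich (hcongr.of_dvd (pow_dvd_pow _ (by omega))) ((hw.pow 2).pow ℓ)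
  · have hnw : ¬ IsWieferich p (2 * z.re) := hnot_wieferich (by
      rw [mul_pow, ← sq_abs z.re, habs, ← mul_pow])
    have hdvd := hz.two_mul_pow_dvd_sub_one hp (by omega) hnw hℓ_odd (hre.trans habs.symm)
    have hle := Nat.le_of_dvd (Nat.sub_pos_of_lt hℓ.one_lt) hdvd
    have hre_sq : z.re ^ 2 = (2 * q) ^ 2 := by rw [← sq_abs, habs]
    have hre_le := re_sq_le_norm hd z
    have hq_le : (2 * q) ^ 2 ≤ p ^ (h + 1) := by
      rw [hre_sq, hz.norm_eq] at hre_le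
      exact_mod_cast hre_le
    obtain ⟨hp19, hp30⟩ := two_pow_le_pow_of_two_mul_sq_le hp hmod hw hq hqp hh hq_le
    have hnormℓ : 4 * p ^ (h + 1) ≤ ℓ ^ 2 :=
      calc 4 * p ^ (h + 1) ≤ 4 * p ^ (2 * h) := by gcongr <;> omega
        _ = (2 * p ^ h) ^ 2 := by ring
        _ ≤ ℓ ^ 2 := by gcongr; omega
    have hlt := zsqrtd_norm_lt_re_pow_sq hd (abs_pos.mp (by rw [habs]; simp [hq.pos]))
      (by rw [hz.norm_eq]; exact_mod_cast hp30) hℓ (by omega)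
      (by rw [hz.norm_eq]; exact_mod_cast hnormℓ)
    rw [← sq_abs, hre, ← hre_sq] at hlt
    exact hlt.not_ge hre_le

theorem IsPrimitive.le_of_abs_re_eq_two_mul_prime (hd : d < -1) {m : ℕ} (hm : m ≠ 0) {x y : ℤ√d}
    (hx : IsPrimitive p m x) (hn : ¬ n.Prime) (hy : IsPrimitive p n y) (hyre : |y.re| = 2 * q) :
    n ≤ m := by
  by_contra! hmn
  obtain ⟨g, hg, ⟨α, hα⟩, hmin⟩ := exists_isPrimitive_minimal ⟨m, hm, x, hx⟩
  obtain ⟨k, rfl, hk⟩ :=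
    IsPrimitive.eq_mul_and_abs_re_eq hp (by omega) hd (hx.not_dvd_radicand hp hm) hg hα hmin hy
  have hk1 : k ≠ 1 := by
    rintro rfl
    exact absurd (hmin m hm x hx) (by omega)
  obtain ⟨ℓ, hℓ, e, rfl⟩ := Nat.exists_prime_and_dvd hk1
  have hge0 : g * e ≠ 0 := by
    intro h0
    rw [mul_left_comm, h0] at hmn
    omega
  have hge1 : g * e ≠ 1 := by
    intro h1
    rw [mul_left_comm, h1, mul_one] at hn
    exact hn hℓ
  obtain ⟨h, hh⟩ : ∃ h, g * e = h + 1 := Nat.exists_eq_add_one_of_ne_zero hge0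
  have hαe : IsPrimitive p (h + 1) (α ^ e) := hh ▸ hα.pow hp (by omega) hg e
  refine hαe.abs_re_pow_ne_two_mul_prime hp hmod hw hq hqp hqw (by omega) (by omega) hℓ ?_
  rw [← pow_mul, mul_comm, ← hk, hyre]

end TwicePrimeRealParts

section QuadraticFields

open IntermediateField

variable {F L : Type*} [Field F] [Field L] [Algebra F L]

theorem exists_eq_algebraMap_add_mul_of_mem_adjoin {b : F} {z w : L}
    (hw : w ^ 2 = algebraMap F L b) (h : z ∈ F⟮w⟯) :
    ∃ x y : F, z = algebraMap F L x + algebraMap F L y * w := by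
  have halg : IsAlgebraic F w :=
    ⟨Polynomial.X ^ 2 - Polynomial.C b, Polynomial.X_pow_sub_C_ne_zero two_pos b, by simp [hw]⟩
  rw [← mem_toSubalgebra, adjoin_simple_toSubalgebra_of_isAlgebraic halg] at h
  induction h using Algebra.adjoin_induction with
  | mem x hx => exact ⟨0, 1, by simp_all⟩
  | algebraMap r => exact ⟨r, 0, by simp⟩
  | add u v _ _ hu hv =>
    obtain ⟨x, y, rfl⟩ := hu
    obtain ⟨x', y', rfl⟩ := hv
    exact ⟨x + x', y + y', by simp only [map_add]; ring⟩
  | mul u v _ _ hu hv =>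
    obtain ⟨x, y, rfl⟩ := hu
    obtain ⟨x', y', rfl⟩ := hv
    refine ⟨x * x' + y * y' * b, x * y' + y * x', ?_⟩
    simp only [map_add, map_mul]
    linear_combination (algebraMap F L y * algebraMap F L y') * hw

theorem exists_eq_sq_mul_of_mem_adjoin (h2 : (2 : F) ≠ 0) {a b : F} (ha : ¬ IsSquare a) {z w : L}
    (hz : z ^ 2 = algebraMap F L a) (hw : w ^ 2 = algebraMap F L b) (h : z ∈ F⟮w⟯) :
    ∃ y, a = y ^ 2 * b := by
  have hz_bot : z ∉ (algebraMap F L).range := by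
    rintro ⟨x, rfl⟩
    rw [← map_pow] at hz
    exact ha ⟨x, (sq x ▸ FaithfulSMul.algebraMap_injective F L hz).symm⟩
  obtain ⟨x, y, rfl⟩ := exists_eq_algebraMap_add_mul_of_mem_adjoin hw h
  have hcross : algebraMap F L (2 * x * y) * w = algebraMap F L (a - x ^ 2 - y ^ 2 * b) := by
    simp only [map_sub, map_mul, map_pow, map_ofNat]
    linear_combination hz - algebraMap F L y ^ 2 * hw
  have hxy : 2 * x * y = 0 := by
    by_contra hne
    obtain ⟨t, rfl⟩ : ∃ t, algebraMap F L t = w :=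
      ⟨(a - x ^ 2 - y ^ 2 * b) / (2 * x * y), by
        rw [map_div₀, ← hcross, mul_div_cancel_left₀ _ ((map_ne_zero _).mpr hne)]⟩
    exact hz_bot ⟨x + y * t, by rw [map_add, map_mul]⟩
  rw [hxy, map_zero, zero_mul, eq_comm, map_eq_zero, sub_sub, sub_eq_zero] at hcross
  rcases mul_eq_zero.mp hxy with hx | rfl
  · exact ⟨y, by simpa [(mul_eq_zero.mp hx).resolve_left h2] using hcross⟩
  · exact (ha ⟨x, by simpa [sq] using hcross⟩).elim

theorem adjoin_algebraMap_mul_eq {c : F} (hc : c ≠ 0) (w : L) :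
    F⟮algebraMap F L c * w⟯ = F⟮w⟯ := by
  refine le_antisymm (adjoin_simple_le_iff.mpr ?_) (adjoin_simple_le_iff.mpr ?_)
  · exact mul_mem (F⟮w⟯.algebraMap_mem c) (mem_adjoin_simple_self F w)
  · have hmem := mul_mem (F⟮algebraMap F L c * w⟯.algebraMap_mem c⁻¹)
      (mem_adjoin_simple_self F (algebraMap F L c * w))
    rwa [map_inv₀, inv_mul_cancel_left₀ ((map_ne_zero _).mpr hc)] at hmem

theorem adjoin_eq_adjoin_I {a : ℚ} (ha : a ≠ 0) {z : ℂ} (hz : z ^ 2 = -(a : ℂ) ^ 2) :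
    ℚ⟮z⟯ = ℚ⟮Complex.I⟯ := by
  have hsq : z ^ 2 = (a * Complex.I) ^ 2 := by rw [hz, mul_pow, Complex.I_sq, mul_neg_one]
  rcases sq_eq_sq_iff_eq_or_eq_neg.mp hsq with rfl | rfl
  · exact adjoin_algebraMap_mul_eq ha Complex.I
  · simpa using adjoin_algebraMap_mul_eq (neg_ne_zero.mpr ha) Complex.I

theorem exists_eq_mul_sq_of_ratCast_eq {m n : ℤ} {y : ℚ} (h : (m : ℚ) = y ^ 2 * n) :
    ∃ d a b : ℤ, b ≠ 0 ∧ m = d * a ^ 2 ∧ n = d * b ^ 2 := by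
  have hden : (y.den : ℤ) ≠ 0 := Nat.cast_ne_zero.mpr y.den_ne_zero
  have hmn : m * (y.den : ℤ) ^ 2 = y.num ^ 2 * n := by
    rw [← Rat.num_div_den y, div_pow, div_mul_eq_mul_div,
      eq_div_iff (by exact_mod_cast pow_ne_zero 2 hden)] at h
    exact_mod_cast h
  have hcop : IsCoprime ((y.den : ℤ) ^ 2) (y.num ^ 2) := y.isCoprime_num_den.symm.pow
  obtain ⟨d, rfl⟩ := hcop.dvd_of_dvd_mul_left (Dvd.intro_left m hmn)
  refine ⟨d, y.num, y.den, hden, ?_, mul_comm _ _⟩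
  exact mul_right_cancel₀ (pow_ne_zero 2 hden) (hmn.trans (by ring))

theorem exists_lt_neg_one_eq_mul_sq_of_mem_adjoin {m n : ℤ} (hm : m < 0) {z w : ℂ}
    (hz : z ^ 2 = m) (hw : w ^ 2 = n) (h : z ∈ ℚ⟮w⟯) (hI : ℚ⟮w⟯ ≠ ℚ⟮Complex.I⟯) :
    ∃ d < -1, ∃ a b : ℤ, m = d * a ^ 2 ∧ n = d * b ^ 2 := by
  have hm_sq : ¬ IsSquare (m : ℚ) := fun hsq => (Int.cast_lt_zero.mpr hm).not_ge hsq.nonneg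
  obtain ⟨y, hy⟩ := exists_eq_sq_mul_of_mem_adjoin two_ne_zero hm_sq (b := (n : ℚ))
    (by simpa using hz) (by simpa using hw) h
  obtain ⟨d, a, b, hb, rfl, rfl⟩ := exists_eq_mul_sq_of_ratCast_eq hy
  have hd : d < 0 := by nlinarith [sq_nonneg a]
  have hd_ne : d ≠ -1 := by
    rintro rfl
    exact hI (adjoin_eq_adjoin_I (a := b) (Int.cast_ne_zero.mpr hb) (by simpa using hw))
  exact ⟨d, by omega, a, b, rfl, rfl⟩

end QuadraticFields

theorem isPrimitive_two_mul_prime {p q n : ℕ} (hp : p.Prime) (hmod : p % 4 = 1) (hq : q.Prime)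
    (hqp : q ∣ p - 2) {d a : ℤ} (h : 4 * (q : ℤ) ^ 2 - p ^ n = d * a ^ 2) :
    IsPrimitive p n (⟨2 * q, a⟩ : ℤ√d) where
  norm_eq := by
    rw [zsqrtd_norm_eq]
    linear_combination h
  not_dvd_re := by
    have hp2 := hp.two_le
    have hqle := Nat.le_of_dvd (by omega) hqp
    change ¬ (p : ℤ) ∣ 2 * q
    norm_cast
    rw [hp.dvd_mul, Nat.prime_dvd_prime_iff_eq hp Nat.prime_two, Nat.prime_dvd_prime_iff_eq hp hq]
    omega

theorem four_mul_sq_lt_pow {p q n : ℕ} (hp : 5 ≤ p) (hqp : q ≤ p) (hn : 4 ≤ n) :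
    4 * q ^ 2 < p ^ n :=
  calc 4 * q ^ 2 = (2 * q) ^ 2 := by ring
    _ < (p ^ 2) ^ 2 := Nat.pow_lt_pow_left (by nlinarith) two_ne_zero
    _ = p ^ 4 := by ring
    _ ≤ p ^ n := Nat.pow_le_pow_right (by omega) hn

theorem four_le_of_one_lt_of_not_prime {n : ℕ} (hn1 : 1 < n) (hn : ¬ n.Prime) : 4 ≤ n := by
  by_contra! hlt
  interval_cases n
  exacts [hn Nat.prime_two, hn Nat.prime_three]

theorem stmt_6_general (p : ℕ) (hp : p.Prime) (hmod : p % 4 = 1)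
    (hw : 2 ^ (p - 1) ≡ 1 [MOD p ^ 2])
    (q1 : ℕ) (hq1 : q1.Prime) (hq1dvd : q1 ∣ p - 2)
    (hq1nw : ¬ (q1 ^ (p - 1) ≡ 1 [MOD p ^ 2]))
    (n1 n2 : ℕ) (hc2 : 1 < n2 ∧ ¬ n2.Prime)
    (z1 z2 : ℂ) (hz1 : z1 ^ 2 = 4 * (q1 : ℂ) ^ 2 - (p : ℂ) ^ n1)
    (hz2 : z2 ^ 2 = 4 * (q1 : ℂ) ^ 2 - (p : ℂ) ^ n2)
    (hni1 : IntermediateField.adjoin ℚ {z1} ≠ IntermediateField.adjoin ℚ {Complex.I})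
    (heq : IntermediateField.adjoin ℚ {z1} = IntermediateField.adjoin ℚ {z2}) :
    n2 ≤ n1 := by
  have hneg : 4 * (q1 : ℤ) ^ 2 - p ^ n2 < 0 := sub_neg.mpr <| by
    have hp2 := hp.two_le
    have hqp := Nat.le_of_dvd (by omega) hq1dvd
    exact_mod_cast four_mul_sq_lt_pow (q := q1) (by omega) (by omega)
      (four_le_of_one_lt_of_not_prime hc2.1 hc2.2)
  obtain ⟨d, hd, b, a, hb, ha⟩ := exists_lt_neg_one_eq_mul_sq_of_mem_adjoin hneg
    (hz2.trans (by push_cast; rfl)) (n := 4 * (q1 : ℤ) ^ 2 - p ^ n1)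
    (hz1.trans (by push_cast; rfl)) (heq ▸ IntermediateField.mem_adjoin_simple_self ℚ z2) hni1
  have hn1 : n1 ≠ 0 := by
    rintro rfl
    nlinarith [hq1.two_le, sq_nonneg a]
  exact IsPrimitive.le_of_abs_re_eq_two_mul_prime hp hmod (isWieferich_natCast.mpr hw) hq1 hq1dvd
    (isWieferich_natCast.not.mpr hq1nw) hd hn1 (isPrimitive_two_mul_prime hp hmod hq1 hq1dvd ha)
    hc2.2 (isPrimitive_two_mul_prime hp hmod hq1 hq1dvd hb) (abs_of_nonneg (by positivity))

/-- Let `p` be a prime with `p ≡ 1 (mod 4)` and `2^(p−1) ≡ 1 (mod p^2)`, and let `q1` be a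
prime factor of `p − 2` such that `q1^(p−1) ≢ 1 (mod p^2)`. If `n1` and `n2` are positive
composite numbers such that `ℚ(√(4q1^2 − p^n1)) ≠ ℚ(i)`, `ℚ(√(4q1^2 − p^n2)) ≠ ℚ(i)`, and
`ℚ(√(4q1^2 − p^n1)) = ℚ(√(4q1^2 − p^n2))`, then `n1 = n2`. -/
theorem stmt_6 (p : ℕ) (hp : p.Prime) (hmod : p % 4 = 1)
    (hw : 2 ^ (p - 1) ≡ 1 [MOD p ^ 2])
    (q1 : ℕ) (hq1 : q1.Prime) (hq1dvd : q1 ∣ p - 2)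
    (hq1nw : ¬ (q1 ^ (p - 1) ≡ 1 [MOD p ^ 2]))
    (n1 n2 : ℕ) (hpos1 : 0 < n1) (hpos2 : 0 < n2)
    (hc1 : 1 < n1 ∧ ¬ n1.Prime) (hc2 : 1 < n2 ∧ ¬ n2.Prime)
    (z1 z2 : ℂ) (hz1 : z1 ^ 2 = 4 * (q1 : ℂ) ^ 2 - (p : ℂ) ^ n1)
    (hz2 : z2 ^ 2 = 4 * (q1 : ℂ) ^ 2 - (p : ℂ) ^ n2)
    (hni1 : IntermediateField.adjoin ℚ {z1} ≠ IntermediateField.adjoin ℚ {Complex.I})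
    (hni2 : IntermediateField.adjoin ℚ {z2} ≠ IntermediateField.adjoin ℚ {Complex.I})
    (heq : IntermediateField.adjoin ℚ {z1} = IntermediateField.adjoin ℚ {z2}) :
    n1 = n2 := by
  exact le_antisymm
    (stmt_6_general p hp hmod hw q1 hq1 hq1dvd hq1nw n2 n1 hc1 z2 z1 hz2 hz1 hni2 heq.symm)
    (stmt_6_general p hp hmod hw q1 hq1 hq1dvd hq1nw n1 n2 hc2 z1 z2 hz1 hz2 hni1 heq)
end

section
/- Let p be a prime with p ≡ 3 (mod 4), p ≠ 3, and let n be an odd integer greater than 1. Then p splits in the imaginary quadratic field K = ℚ(√(1 − p^n)), and for any prime ideal ℘ of the ring of integers of K lying over p, the order of the ideal class of ℘ in the ideal class group of K is exactly n. -/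
/-!
With `ζ = √(1 - p ^ n)`, the elements `1 + ζ` and `1 - ζ` have sum `2` and product `p ^ n`, so they
are coprime and each generates the `n`-th power of a prime over `p`. If the class of such a prime
has order `s`, with `n = s * t`, then `β ^ t = 1 + ζ` for some `β = k + b * ζ`, because the only
units are `±1`; here `k` is an integer and `b` is rational. Comparing the coefficients of `1` gives
`k ∣ 1`, and then the norm of `β` and the coefficients of `ζ` give an integer `y` with
`(x - 1) * y ^ 2 = x ^ t - 1`, where `x = p ^ s`.

For such `x` and `y`, the numbers `x ^ ((t - 1) / 2)` and `y` are the coordinates of an odd power of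
`√x + √(x - 1)`, a square root of the fundamental Pell unit `a + √(a ^ 2 - 1)`, `a = 2 * x - 1`.
The first coordinate is then a power of `p`. If `t ≠ 1`, then `p` divides the exponent of that odd
power, so the first coordinate of the `p`-th power is also a power of `p`. But that coordinate is
larger than `p` and divisible by `p` only once.
-/

section PellPowers

open Pell

variable {a : ℤ}

/-- The solution `(a, 1)` of `x ^ 2 - (a ^ 2 - 1) * y ^ 2 = 1`. -/
def pellUnit (a : ℤ) : Solution₁ (a ^ 2 - 1) :=
  .mk a 1 (by ring)

@[simp]
theorem x_pellUnit (a : ℤ) : (pellUnit a).x = a := rfl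

@[simp]
theorem y_pellUnit (a : ℤ) : (pellUnit a).y = 1 := rfl

/-- With `η = √((a + 1) / 2) + √((a - 1) / 2)`, a square root of `a + √(a ^ 2 - 1)`, this is the
coefficient of `√((a + 1) / 2)` in `η * (u.x + u.y * √(a ^ 2 - 1))`. For `u` a power of
`pellUnit a` it is the coefficient of `√((a + 1) / 2)` in an odd power of `η`. -/
def halfCoeff (u : Solution₁ (a ^ 2 - 1)) : ℤ :=
  u.x + (a - 1) * u.y

theorem isFundamental_pellUnit (ha : 1 < a) : IsFundamental (pellUnit a) := by
  refine ⟨ha, one_pos, fun {b} hb => ?_⟩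
  have hy : 1 ≤ b.y ^ 2 :=
    Int.add_one_le_iff.2 (sq_pos_of_ne_zero (Solution₁.y_ne_zero_of_one_lt_x hb))
  have hx : a ^ 2 ≤ b.x ^ 2 := by nlinarith [b.prop_x]
  exact (pow_le_pow_iff_left₀ (by rw [x_pellUnit]; omega) (by omega) two_ne_zero).1 hx

theorem x_mul_self_add_one {d : ℤ} (u : Solution₁ d) : (u * u).x + 1 = 2 * u.x ^ 2 := by
  rw [Solution₁.x_mul]
  linear_combination -u.prop

theorem isCoprime_x {d : ℤ} (u : Solution₁ d) : IsCoprime u.x d :=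
  ⟨u.x, -u.y ^ 2, by linear_combination u.prop⟩

theorem x_mul_self_mul_pellUnit_add_one (u : Solution₁ (a ^ 2 - 1)) :
    (u * u * pellUnit a).x + 1 = (a + 1) * halfCoeff u ^ 2 := by
  simp only [halfCoeff, Solution₁.x_mul, Solution₁.y_mul, x_pellUnit, y_pellUnit]
  linear_combination -u.prop

theorem y_mul_self_mul_pellUnit (u : Solution₁ (a ^ 2 - 1)) :
    (u * u * pellUnit a).y = halfCoeff u * (u.x + (a + 1) * u.y) := by
  simp only [halfCoeff, Solution₁.x_mul, Solution₁.y_mul, x_pellUnit, y_pellUnit]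
  ring

theorem halfCoeff_dvd_halfCoeff_mul_add (u v : Solution₁ (a ^ 2 - 1)) :
    halfCoeff u ∣ halfCoeff (v * (u * u * pellUnit a)) + halfCoeff v := by
  refine ⟨(a + 1) * halfCoeff u * halfCoeff v +
    (u.x + (a + 1) * u.y) * ((a ^ 2 - 1) * v.y + (a - 1) * v.x), ?_⟩
  have hx := x_mul_self_mul_pellUnit_add_one u
  have hy := y_mul_self_mul_pellUnit u
  rw [halfCoeff, Solution₁.x_mul v, Solution₁.y_mul v]
  simp only [halfCoeff] at hx hy ⊢
  linear_combination (v.x + (a - 1) * v.y) * hx + ((a ^ 2 - 1) * v.y + (a - 1) * v.x) * hy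

theorem halfCoeff_pow_dvd_halfCoeff_pow (h l : ℕ) :
    halfCoeff (pellUnit a ^ h) ∣ halfCoeff (pellUnit a ^ (h + l * (2 * h + 1))) := by
  induction l with
  | zero => simp
  | succ l ih =>
    have hpow : pellUnit a ^ (h + (l + 1) * (2 * h + 1)) = pellUnit a ^ (h + l * (2 * h + 1)) *
        (pellUnit a ^ h * pellUnit a ^ h * pellUnit a) := by
      simp only [← pow_add, ← pow_succ]
      congr 1
      ring
    rw [hpow]
    exact (dvd_add_left ih).1 (halfCoeff_dvd_halfCoeff_mul_add _ _)

theorem halfCoeff_pow_add_two (k : ℕ) :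
    halfCoeff (pellUnit a ^ (k + 2)) =
      2 * a * halfCoeff (pellUnit a ^ (k + 1)) - halfCoeff (pellUnit a ^ k) := by
  simp only [pow_succ, halfCoeff, Solution₁.x_mul, Solution₁.y_mul, x_pellUnit, y_pellUnit]
  ring

theorem three_mul_halfCoeff_pow_modEq (k : ℕ) :
    3 * halfCoeff (pellUnit a ^ k) ≡
      (-1) ^ k * ((2 * k + 1) * (3 - k * (k + 1) * (a + 1))) [ZMOD (a + 1) ^ 2] := by
  induction k using Nat.twoStepInduction with
  | zero => simp [halfCoeff]
  | one =>
    simp only [halfCoeff, pow_one, x_pellUnit, y_pellUnit, Nat.cast_one]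
    ring_nf
    rfl
  | more k ih₀ ih₁ =>
    rw [halfCoeff_pow_add_two, mul_sub, mul_left_comm]
    refine ((ih₁.mul_left (2 * a)).sub ih₀).trans (Int.modEq_iff_dvd.2 ?_)
    refine ⟨-(-1) ^ k * (2 * (k + 1) * (k + 2) * (2 * k + 3)), ?_⟩
    push_cast
    ring

theorem two_mul_add_one_lt_halfCoeff_pow (ha : 4 ≤ a) {k : ℕ} (hk : k ≠ 0) :
    2 * k + 1 < halfCoeff (pellUnit a ^ k) := by
  have hx (k : ℕ) : 0 < (pellUnit a ^ k).x := Solution₁.x_pow_pos (by rw [x_pellUnit]; omega) k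
  have hy : ∀ k : ℕ, k ≤ (pellUnit a ^ k).y := by
    intro k
    induction k with
    | zero => simp
    | succ k ih =>
      have hsucc : (pellUnit a ^ (k + 1)).y = (pellUnit a ^ k).x + (pellUnit a ^ k).y * a := by
        simp [pow_succ (pellUnit a) k]
      rw [hsucc]
      push_cast
      nlinarith [hx k]
  have := hx k
  have := hy k
  have : 0 < k := Nat.pos_of_ne_zero hk
  rw [halfCoeff]
  nlinarith

theorem dvd_three_mul_halfCoeff_pow_iff {m : ℤ} (hm : m ∣ (a + 1) ^ 2) (k : ℕ) :
    m ∣ 3 * halfCoeff (pellUnit a ^ k) ↔ m ∣ (2 * k + 1) * (3 - k * (k + 1) * (a + 1)) := by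
  rw [((three_mul_halfCoeff_pow_modEq k).of_dvd hm).dvd_iff,
    (isUnit_neg_one.pow k).dvd_mul_left]

theorem prime_dvd_two_mul_add_one {p : ℕ} (hp : p.Prime) (hp3 : p ≠ 3) (hpa : (p : ℤ) ∣ a + 1)
    {k : ℕ} (hdvd : (p : ℤ) ∣ halfCoeff (pellUnit a ^ k)) : p ∣ 2 * k + 1 := by
  have h := (dvd_three_mul_halfCoeff_pow_iff (dvd_pow hpa two_ne_zero) k).1 (hdvd.mul_left 3)
  rcases Int.Prime.dvd_mul' hp h with h | h
  · exact_mod_cast h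
  · have h3 : p ∣ 3 := by exact_mod_cast (dvd_sub_left (hpa.mul_left _)).1 h
    exact absurd ((Nat.prime_dvd_prime_iff_eq hp Nat.prime_three).1 h3) hp3

theorem not_prime_sq_dvd_halfCoeff_pow {p h : ℕ} (hp : p.Prime) (hp3 : p ≠ 3)
    (hpa : (p : ℤ) ∣ a + 1) (hph : p = 2 * h + 1) :
    ¬ (p : ℤ) ^ 2 ∣ halfCoeff (pellUnit a ^ h) := by
  intro hdvd
  have hmul := (dvd_three_mul_halfCoeff_pow_iff (pow_dvd_pow_of_dvd hpa 2) h).1 (hdvd.mul_left 3)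
  rw [show (2 * h + 1 : ℤ) = p by exact_mod_cast hph.symm, sq] at hmul
  have hsub := Int.dvd_of_mul_dvd_mul_left (by exact_mod_cast hp.ne_zero) hmul
  have h3 : p ∣ 3 := by exact_mod_cast (dvd_sub_left (hpa.mul_left _)).1 hsub
  exact hp3 ((Nat.prime_dvd_prime_iff_eq hp Nat.prime_three).1 h3)

/-- The coefficient attached to `h = (p - 1) / 2` divides the given one, is larger than `p`, and
is divisible by `p` only once. -/
theorem not_halfCoeff_pow_dvd_prime_pow {p k m : ℕ} (hp : p.Prime) (hp3 : p ≠ 3) (ha : 4 ≤ a)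
    (hpa : (p : ℤ) ∣ a + 1) (hpk : p ∣ 2 * k + 1) :
    ¬ halfCoeff (pellUnit a ^ k) ∣ (p : ℤ) ^ m := by
  intro hdvd
  obtain ⟨q, hq⟩ := hpk
  have hodd : Odd (p * q) := hq ▸ odd_two_mul_add_one k
  obtain ⟨h, hh⟩ := Nat.Odd.of_mul_left hodd
  obtain ⟨l, hl⟩ := Nat.Odd.of_mul_right hodd
  have hk : k = h + l * (2 * h + 1) := by
    rw [hh, hl] at hq
    linarith
  have hlt : (p : ℤ) < halfCoeff (pellUnit a ^ h) := by
    rw [hh]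
    exact_mod_cast two_mul_add_one_lt_halfCoeff_pow ha (by have := hp.two_le; omega)
  obtain ⟨i, -, hi⟩ := (Nat.dvd_prime_pow hp).1
    (Int.natAbs_dvd_natAbs.2 ((halfCoeff_pow_dvd_halfCoeff_pow h l).trans (hk ▸ hdvd)))
  have hpow : halfCoeff (pellUnit a ^ h) = (p : ℤ) ^ i := by
    rw [← Int.natAbs_of_nonneg (p.cast_nonneg.trans hlt.le), hi, Nat.cast_pow]
  have hi1 : i < 2 := by
    by_contra! hi2
    exact not_prime_sq_dvd_halfCoeff_pow hp hp3 hpa hh (hpow ▸ pow_dvd_pow _ hi2)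
  have hle : p ^ i ≤ p ^ 1 := Nat.pow_le_pow_right hp.pos (by omega)
  rw [pow_one] at hle
  rw [hpow] at hlt
  exact_mod_cast absurd hlt (not_lt.2 (by exact_mod_cast hle))

/-- `2 * x ^ t - 1 + x ^ m * y * √(a ^ 2 - 1)` has norm one when `t = 2 * m + 1`, hence is a power
of the fundamental unit; the exponent is odd since `x` divides `a ^ 2 - 1`. -/
theorem exists_halfCoeff_sq_eq {x y : ℤ} {m : ℕ} (hx : 1 < x) (ha : a + 1 = 2 * x) (hy : 0 ≤ y)
    (h : (x - 1) * y ^ 2 = x ^ (2 * m + 1) - 1) :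
    ∃ k : ℕ, halfCoeff (pellUnit a ^ k) ^ 2 = (x ^ m) ^ 2 := by
  have hxt : 0 < x ^ (2 * m + 1) := by positivity
  let u : Solution₁ (a ^ 2 - 1) := .mk (2 * x ^ (2 * m + 1) - 1) (x ^ m * y) <| by
    linear_combination (-4 * x ^ (2 * m + 1)) * h - (a + 2 * x - 1) * x ^ (2 * m) * y ^ 2 * ha
  have hux : u.x = 2 * x ^ (2 * m + 1) - 1 := rfl
  obtain ⟨j, hj⟩ := (isFundamental_pellUnit (by omega)).eq_pow_of_nonneg
    (show 0 < u.x by omega) (mul_nonneg (by positivity) hy)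
  rcases Nat.even_or_odd' j with ⟨k, rfl | rfl⟩
  · rw [two_mul, pow_add] at hj
    have hsq := x_mul_self_add_one (pellUnit a ^ k)
    rw [← hj, hux, sub_add_cancel] at hsq
    have hdvd : x ∣ (pellUnit a ^ k).x ^ 2 := ⟨x ^ (2 * m), by linarith [pow_succ' x (2 * m)]⟩
    have hdvd' : x ∣ a ^ 2 - 1 := ⟨2 * (a - 1), by linear_combination (a - 1) * ha⟩
    have hunit : IsUnit x := (isCoprime_x (pellUnit a ^ k)).pow_left.isUnit_of_dvd' hdvd hdvd'
    exact absurd (Int.isUnit_iff.1 hunit) (by omega)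
  · rw [pow_succ (pellUnit a), two_mul, pow_add] at hj
    have hsq := x_mul_self_mul_pellUnit_add_one (pellUnit a ^ k)
    rw [← hj, hux, ha] at hsq
    refine ⟨k, mul_left_cancel₀ (show (2 * x : ℤ) ≠ 0 by omega) ?_⟩
    linear_combination -hsq

end PellPowers

theorem sub_one_mul_sq_ne_pow_sub_one {p s t : ℕ} (hp : p.Prime) (hp5 : 5 ≤ p) (hs : s ≠ 0)
    (ht : Odd t) (ht1 : t ≠ 1) (y : ℤ) :
    ((p : ℤ) ^ s - 1) * y ^ 2 ≠ ((p : ℤ) ^ s) ^ t - 1 := by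
  intro h
  obtain ⟨m, rfl⟩ := ht
  have hpx : (p : ℤ) ∣ p ^ s := dvd_pow_self _ hs
  have hle : (p : ℤ) ≤ p ^ s := Int.le_of_dvd (by have := hp.pos; positivity) hpx
  have ha : (2 * p ^ s - 1 : ℤ) + 1 = 2 * p ^ s := sub_add_cancel _ _
  have hpa : (p : ℤ) ∣ (2 * p ^ s - 1) + 1 := hpx.mul_left 2 |>.trans ha.symm.dvd
  obtain ⟨k, hk⟩ := exists_halfCoeff_sq_eq (by omega) ha (abs_nonneg y) (by rwa [sq_abs])
  have hdvd : (p : ℤ) ∣ halfCoeff (pellUnit (2 * p ^ s - 1) ^ k) :=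
    Int.Prime.dvd_pow' hp (hk ▸ dvd_pow (dvd_pow hpx (by omega)) two_ne_zero)
  refine not_halfCoeff_pow_dvd_prime_pow hp (by omega) (by omega) hpa
    (prime_dvd_two_mul_add_one hp (by omega) hpa hdvd) (m := s * m) ?_
  rw [pow_mul]
  exact (Int.pow_dvd_pow_iff two_ne_zero).1 hk.dvd

section IdealPowers

open Ideal

variable {R : Type*} [CommRing R]

theorem isCoprime_of_add_eq_two {x y : R} {N : ℤ} (hN : Odd N) (hadd : x + y = 2)
    (hmul : x * y = N) : IsCoprime x y := by
  obtain ⟨j, rfl⟩ := hN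
  refine ⟨y - j, -j, ?_⟩
  push_cast at hmul
  linear_combination hmul - j * hadd

theorem ne_top_of_pow_eq_span {P : Ideal R} {α : R} {n : ℕ} (hP : P ^ n = span {α})
    (hα : ¬ IsUnit α) : P ≠ ⊤ := by
  rintro rfl
  rw [top_pow, eq_comm, span_singleton_eq_top] at hP
  exact hα hP

theorem ne_of_pow_eq_span_of_isCoprime {P Q : Ideal R} {α α' : R} {n : ℕ}
    (hP : P ^ n = span {α}) (hQ : Q ^ n = span {α'}) (hcop : IsCoprime α α')
    (hα : ¬ IsUnit α) : P ≠ Q := by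
  rintro rfl
  exact hα (hcop.isUnit_of_dvd (span_singleton_le_span_singleton.1 (hQ.symm.trans hP).le))

variable [IsDedekindDomain R]

theorem exists_pow_eq_span_of_isCoprime_of_mul_eq_pow {α α' π : R} {n : ℕ} (hn : n ≠ 0)
    (hcop : IsCoprime α α') (hmul : α * α' = π ^ n) :
    ∃ P Q : Ideal R, P ^ n = span {α} ∧ Q ^ n = span {α'} ∧ P * Q = span {π} := by
  have hspan : span {α} * span {α'} = span {π} ^ n := by
    rw [span_singleton_mul_span_singleton, span_singleton_pow, hmul]
  have hcop' := (isCoprime_span_singleton_iff α α').2 hcop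
  obtain ⟨P, hP⟩ := exists_eq_pow_of_mul_eq_pow_of_coprime hcop' hspan
  obtain ⟨Q, hQ⟩ := exists_eq_pow_of_mul_eq_pow_of_coprime hcop'.symm
    (by rwa [mul_comm])
  refine ⟨P, Q, hP.symm, hQ.symm, ?_⟩
  rw [hP, hQ, ← mul_pow] at hspan
  exact pow_left_injective hn hspan

theorem isPrime_of_mul_eq_span_natCast [Module.Free ℤ R] [Module.Finite ℤ R]
    (hrank : Module.finrank ℤ R = 2) {p : ℕ} (hp : p.Prime) {P Q : Ideal R} (hP : P ≠ ⊤)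
    (hQ : Q ≠ ⊤) (hmul : P * Q = span {(p : R)}) : P.IsPrime := by
  have hnorm : absNorm P * absNorm Q = p ^ 2 := by
    rw [← map_mul, hmul, absNorm_span_natCast, hrank]
  have hPp := (Nat.Prime.mul_eq_prime_sq_iff hp (absNorm_eq_one_iff.not.2 hP)
    (absNorm_eq_one_iff.not.2 hQ)).1 hnorm
  exact isPrime_of_irreducible_absNorm (hPp.1 ▸ hp)

theorem eq_or_eq_of_mul_eq_span {𝔭 P Q : Ideal R} {π : R} (hπ : π ≠ 0) (hP : P.IsPrime)
    (hQ : Q.IsPrime) (hmul : P * Q = span {π}) (h𝔭 : 𝔭.IsPrime) (hmem : π ∈ 𝔭) :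
    𝔭 = P ∨ 𝔭 = Q := by
  have hne : P * Q ≠ ⊥ := by rwa [hmul, Ne, span_singleton_eq_bot]
  have hle : P * Q ≤ 𝔭 := by rwa [hmul, span_singleton_le_iff_mem]
  rcases h𝔭.mul_le.1 hle with h | h
  · exact .inl ((hP.isMaximal (left_ne_zero_of_mul hne)).eq_of_le h𝔭.ne_top h).symm
  · exact .inr ((hQ.isMaximal (right_ne_zero_of_mul hne)).eq_of_le h𝔭.ne_top h).symm

theorem orderOf_mk0_eq_of_pow_eq_span {P : nonZeroDivisors (Ideal R)} {α : R} {n : ℕ}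
    (hP : (P : Ideal R) ^ n = span {α})
    (hα : ∀ s t β, n = s * t → Associated (β ^ t) α → t = 1) :
    orderOf (ClassGroup.mk0 P) = n := by
  have hpow (m : ℕ) : ClassGroup.mk0 P ^ m = 1 ↔ ((P : Ideal R) ^ m).IsPrincipal := by
    rw [← map_pow, ClassGroup.mk0_eq_one_iff, SubmonoidClass.coe_pow]
  obtain ⟨t, ht⟩ := orderOf_dvd_of_pow_eq_one ((hpow n).2 ⟨α, hP⟩)
  obtain ⟨β, hβ⟩ := (hpow _).1 (pow_orderOf_eq_one (ClassGroup.mk0 P))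
  have hβt : Associated (β ^ t) α := by
    rw [← span_singleton_eq_span_singleton, ← span_singleton_pow, ← hP, ht, pow_mul, hβ]
  rw [ht, hα _ t β ht hβt, mul_one]

end IdealPowers

section QuadraticExtension

variable {F K : Type*} [Field F] [Field K] [Algebra F K] {ζ : K}

theorem linearIndependent_one_of_notMem_range (hζ : ζ ∉ (algebraMap F K).range) :
    LinearIndependent F ![1, ζ] := by
  refine (LinearIndependent.pair_iff' one_ne_zero).2 fun a ha => hζ ⟨a, ?_⟩
  rwa [Algebra.algebraMap_eq_smul_one]

theorem algebraMap_add_mul_inj (hζ : ζ ∉ (algebraMap F K).range) {a b a' b' : F}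
    (h : algebraMap F K a + algebraMap F K b * ζ = algebraMap F K a' + algebraMap F K b' * ζ) :
    a = a' ∧ b = b' := by
  refine (linearIndependent_one_of_notMem_range hζ).eq_of_pair ?_
  simpa only [Algebra.smul_def, mul_one] using h

variable [Algebra.IsQuadraticExtension F K]

theorem exists_eq_algebraMap_add_mul (hζ : ζ ∉ (algebraMap F K).range) (β : K) :
    ∃ a b : F, β = algebraMap F K a + algebraMap F K b * ζ := by
  have hspan := (linearIndependent_one_of_notMem_range hζ).span_eq_top_of_card_eq_finrank'
    (by rw [Fintype.card_fin, Algebra.IsQuadraticExtension.finrank_eq_two F K])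
  have hβ : β ∈ Submodule.span F {1, ζ} := by
    rw [← Matrix.range_cons_cons_empty, hspan]
    exact Submodule.mem_top
  obtain ⟨a, b, rfl⟩ := Submodule.mem_span_pair.1 hβ
  exact ⟨a, b, by simp only [Algebra.smul_def, mul_one]⟩

variable [Algebra.IsSeparable F K] {d : F}

theorem exists_algEquiv_apply_eq_neg (hζ : ζ ∉ (algebraMap F K).range)
    (hd : ζ ^ 2 = algebraMap F K d) :
    ∃ σ : K ≃ₐ[F] K, σ ζ = -ζ ∧ (1 : K ≃ₐ[F] K) ≠ σ ∧ ∀ τ : K ≃ₐ[F] K, τ = 1 ∨ τ = σ := by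
  have hcard : Nat.card (K ≃ₐ[F] K) = 2 := by
    rw [IsGalois.card_aut_eq_finrank, Algebra.IsQuadraticExtension.finrank_eq_two]
  obtain ⟨σ, hσ, hσ'⟩ := (Nat.card_eq_two_iff' (1 : K ≃ₐ[F] K)).1 hcard
  have hsq : σ ζ ^ 2 = ζ ^ 2 := by rw [← map_pow, hd, AlgEquiv.commutes]
  refine ⟨σ, (sq_eq_sq_iff_eq_or_eq_neg.1 hsq).resolve_left fun hfix => hσ ?_, hσ.symm,
    fun τ => or_iff_not_imp_left.2 (hσ' τ)⟩
  ext β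
  obtain ⟨a, b, rfl⟩ := exists_eq_algebraMap_add_mul hζ β
  simp [hfix]

theorem trace_algebraMap_add_mul (hζ : ζ ∉ (algebraMap F K).range)
    (hd : ζ ^ 2 = algebraMap F K d) (a b : F) :
    Algebra.trace F K (algebraMap F K a + algebraMap F K b * ζ) = 2 * a := by
  obtain ⟨σ, hσ, hne, hall⟩ := exists_algEquiv_apply_eq_neg hζ hd
  apply (algebraMap F K).injective
  rw [trace_eq_sum_automorphisms,
    Fintype.sum_eq_add 1 σ hne fun τ hτ => absurd (hall τ) (not_or.2 hτ)]
  simp only [AlgEquiv.one_apply, map_add, map_mul, AlgEquiv.commutes, hσ, map_ofNat]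
  ring

theorem norm_algebraMap_add_mul (hζ : ζ ∉ (algebraMap F K).range)
    (hd : ζ ^ 2 = algebraMap F K d) (a b : F) :
    Algebra.norm F (algebraMap F K a + algebraMap F K b * ζ) = a ^ 2 - d * b ^ 2 := by
  obtain ⟨σ, hσ, hne, hall⟩ := exists_algEquiv_apply_eq_neg hζ hd
  apply (algebraMap F K).injective
  rw [Algebra.norm_eq_prod_automorphisms,
    Fintype.prod_eq_mul 1 σ hne fun τ hτ => absurd (hall τ) (not_or.2 hτ)]
  simp only [AlgEquiv.one_apply, map_add, map_sub, map_mul, map_pow, AlgEquiv.commutes, hσ]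
  linear_combination -algebraMap F K b ^ 2 * hd

end QuadraticExtension

theorem mul_sq_ne_odd {m N : ℤ} (hm : m % 4 = 2) (hN : Odd N) (q : ℚ) : (m : ℚ) * q ^ 2 ≠ N := by
  intro h
  obtain ⟨a, rfl⟩ : ∃ a, m = a * 2 := ⟨m / 2, by omega⟩
  have ha : a ≠ 0 := by omega
  have hN0 : N ≠ 0 := by
    rintro rfl
    exact Int.not_odd_zero hN
  have hq : q ≠ 0 := by
    rintro rfl
    exact hN0 (by simpa using h.symm)
  have hval := congrArg (padicValRat 2) h
  rw [padicValRat.mul (by exact_mod_cast (by omega : a * 2 ≠ 0)) (pow_ne_zero 2 hq),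
    padicValRat.pow, padicValRat.of_int, padicValRat.of_int,
    show a * 2 = a * (2 : ℕ) from rfl, padicValInt_mul_eq_succ a ha,
    padicValInt.eq_zero_of_not_dvd (z := a) (by omega),
    padicValInt.eq_zero_of_not_dvd (z := N) (by obtain ⟨k, rfl⟩ := hN; omega)] at hval
  omega

theorem exists_add_pow_odd_eq {R : Type*} [CommRing R] {k c : ℤ} {r : R} (hr : r ^ 2 = c) {t : ℕ}
    (ht : Odd t) : ∃ A B : ℤ, (k + r) ^ t = k * A + B * r := by
  obtain ⟨j, rfl⟩ := ht
  induction j with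
  | zero => exact ⟨1, 1, by simp⟩
  | succ j ih =>
    obtain ⟨A, B, hAB⟩ := ih
    refine ⟨A * (k ^ 2 + c) + 2 * B * c, B * (k ^ 2 + c) + 2 * k ^ 2 * A, ?_⟩
    rw [show 2 * (j + 1) + 1 = 2 * j + 1 + 2 by ring, pow_add, hAB]
    push_cast
    linear_combination (2 * k * B + k * A + B * r) * hr

theorem neg_of_one_sub_eq_pow {m : ℤ} {p n : ℕ} (hp : 1 < p) (hn : n ≠ 0) (hmp : 1 - m = p ^ n) :
    m < 0 := by
  have : (1 : ℤ) < p ^ n := one_lt_pow₀ (by exact_mod_cast hp) hn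
  omega

theorem one_sub_pow_emod_four {p n : ℕ} (hp : p % 4 = 3) (hn : Odd n) :
    (1 - (p : ℤ) ^ n) % 4 = 2 := by
  have hp' : (p : ℤ) ≡ -1 [ZMOD 4] := by
    rw [Int.ModEq]
    omega
  have hpow := (hp'.pow n).sub_left 1
  rw [hn.neg_one_pow] at hpow
  exact hpow

theorem notMem_range_of_sq_eq_intCast {K : Type*} [Field K] [CharZero K] {m : ℤ} {ζ : K}
    (hm : m % 4 = 2) (hζ : ζ ^ 2 = m) : ζ ∉ (algebraMap ℚ K).range := by
  rintro ⟨q, rfl⟩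
  have hq : q ^ 2 = m := by exact_mod_cast (algebraMap ℚ K).injective (by simpa using hζ)
  have hm0 : (m : ℚ) ≠ 0 := by exact_mod_cast (by omega : m ≠ 0)
  refine mul_sq_ne_odd hm odd_one q⁻¹ ?_
  rw [inv_pow, hq, mul_inv_cancel₀ hm0, Int.cast_one]

section QuadraticNumberField

open NumberField

variable {K : Type*} [Field K] [NumberField K] {m : ℤ} {ζ : 𝓞 K}

theorem coe_notMem_range_and_sq_eq (hm : m % 4 = 2) (hζ : ζ ^ 2 = m) :
    (ζ : K) ∉ (algebraMap ℚ K).range ∧ (ζ : K) ^ 2 = algebraMap ℚ K m := by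
  have hsq : (ζ : K) ^ 2 = m := by rw [← map_pow, hζ, map_intCast]
  exact ⟨notMem_range_of_sq_eq_intCast hm hsq, by simpa using hsq⟩

variable [Algebra.IsQuadraticExtension ℚ K]

theorem norm_one_add (hm : m % 4 = 2) (hζ : ζ ^ 2 = m) : Algebra.norm ℤ (1 + ζ) = 1 - m := by
  obtain ⟨hζ', hd⟩ := coe_notMem_range_and_sq_eq hm hζ
  have hnorm := norm_algebraMap_add_mul hζ' hd 1 1
  rw [map_one, one_mul, one_pow, mul_one] at hnorm
  have hcoe : (Algebra.norm ℤ (1 + ζ) : ℚ) = 1 - m := by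
    rw [Algebra.coe_norm_int]
    simpa using hnorm
  exact_mod_cast hcoe

/-- `2 * a` and `a ^ 2 - m * b ^ 2` are integers, being the trace and norm of `a + b * ζ`, and the
former is even since `m * (2 * b) ^ 2` is not odd. -/
theorem exists_coe_eq_intCast_add_mul (hm : m % 4 = 2) (hζ : ζ ^ 2 = m) (β : 𝓞 K) :
    ∃ (k c : ℤ) (b : ℚ), (β : K) = k + b * ζ ∧ m * b ^ 2 = c ∧ Algebra.norm ℤ β = k ^ 2 - c := by
  obtain ⟨hζ', hd⟩ := coe_notMem_range_and_sq_eq hm hζ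
  obtain ⟨a, b, hβ⟩ := exists_eq_algebraMap_add_mul hζ' (β : K)
  have htrace := Algebra.coe_trace_int β
  rw [hβ, trace_algebraMap_add_mul hζ' hd] at htrace
  have hnorm := Algebra.coe_norm_int β
  rw [hβ, norm_algebraMap_add_mul hζ' hd] at hnorm
  obtain ⟨k, hk⟩ : Even (Algebra.trace ℤ (𝓞 K) β) := by
    by_contra hodd
    refine mul_sq_ne_odd hm (N := Algebra.trace ℤ (𝓞 K) β ^ 2 - 4 * Algebra.norm ℤ β) ?_ (2 * b) ?_
    · exact (Int.not_even_iff_odd.1 hodd).pow.sub_even ((by decide : Even (4 : ℤ)).mul_right _)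
    · push_cast
      linear_combination 4 * hnorm - (Algebra.trace ℤ (𝓞 K) β + 2 * a) * htrace
  have hka : a = k := by
    rw [hk] at htrace
    push_cast at htrace
    linarith
  refine ⟨k, k ^ 2 - Algebra.norm ℤ β, b, by simp [hβ, hka], ?_, by ring⟩
  push_cast
  linear_combination hnorm + (a + k) * hka

theorem isUnit_iff_eq_one_or_eq_neg_one (hm : m % 4 = 2) (hm0 : m < 0) (hζ : ζ ^ 2 = m) {u : 𝓞 K} :
    IsUnit u ↔ u = 1 ∨ u = -1 := by
  refine ⟨fun hu => ?_, by rintro (rfl | rfl) <;> simp⟩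
  obtain ⟨k, c, b, hkb, hc, hnorm⟩ := exists_coe_eq_intCast_add_mul hm hζ u
  have hm0' : (m : ℚ) < 0 := by exact_mod_cast hm0
  have hc0 : c ≤ 0 := by exact_mod_cast hc ▸ mul_nonpos_of_nonpos_of_nonneg hm0'.le (sq_nonneg b)
  have hk : k ^ 2 - c = 1 := by
    rcases Int.isUnit_iff.1 (hu.map (Algebra.norm ℤ)) with h | h <;> nlinarith
  have hc1 : c ≠ -1 := fun h => mul_sq_ne_odd hm (N := -1) (by decide) b (h ▸ hc)
  have hc0 : c = 0 := by have := sq_nonneg k; omega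
  have hb : b = 0 := by simpa [hc0, hm0'.ne] using hc
  have hk1 : k = 1 ∨ k = -1 := sq_eq_one_iff.1 (by omega)
  have hu : (u : K) = k := by simp [hkb, hb]
  refine hk1.imp ?_ ?_ <;> rintro rfl <;> ext <;> simp [hu]

theorem not_isUnit_one_add (hm : m % 4 = 2) (hm0 : m < 0) (hζ : ζ ^ 2 = m) : ¬ IsUnit (1 + ζ) := by
  intro hu
  rcases Int.isUnit_iff.1 (norm_one_add hm hζ ▸ hu.map (Algebra.norm ℤ)) with h | h <;> omega

theorem eq_one_of_pow_eq_one_add {p s t : ℕ} (hp : p.Prime) (hp5 : 5 ≤ p) (hs : s ≠ 0)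
    (ht : Odd t) (hm : m % 4 = 2) (hmp : 1 - m = (p ^ s) ^ t) (hζ : ζ ^ 2 = m) {β : 𝓞 K}
    (hβ : β ^ t = 1 + ζ) : t = 1 := by
  obtain ⟨hζ', hd⟩ := coe_notMem_range_and_sq_eq hm hζ
  obtain ⟨k, c, b, hkb, hc, hnorm⟩ := exists_coe_eq_intCast_add_mul hm hζ β
  have hkc : k ^ 2 - c = p ^ s := by
    refine ht.strictMono_pow.injective ?_
    rw [← hnorm, ← map_pow, hβ, norm_one_add hm hζ, hmp]
  have hr : ((b : K) * ζ) ^ 2 = c := by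
    have hc' : (m : K) * b ^ 2 = c := by exact_mod_cast congrArg (algebraMap ℚ K) hc
    rw [mul_pow, hd, ← hc']
    simp [mul_comm]
  obtain ⟨A, B, hAB⟩ := exists_add_pow_odd_eq (k := k) hr ht
  have hcoord : algebraMap ℚ K (k * A) + algebraMap ℚ K (B * b) * ζ =
      algebraMap ℚ K 1 + algebraMap ℚ K 1 * ζ := by
    have hβ' : (β : K) ^ t = 1 + ζ := by exact_mod_cast congrArg (algebraMap (𝓞 K) K) hβ
    simpa [mul_assoc, ← hAB, ← hkb] using hβ'
  obtain ⟨hkA, hBb⟩ := algebraMap_add_mul_inj hζ' hcoord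
  have hk : k ^ 2 = 1 := by
    have hunit : IsUnit k := .of_mul_eq_one A (by exact_mod_cast hkA)
    exact sq_eq_one_iff.2 (Int.isUnit_iff.1 hunit)
  have hB : B ^ 2 * c = m := by
    have : (B : ℚ) ^ 2 * c = m := by linear_combination -B ^ 2 * hc + m * (B * b + 1) * hBb
    exact_mod_cast this
  by_contra ht1
  refine sub_one_mul_sq_ne_pow_sub_one hp hp5 hs ht ht1 B ?_
  linear_combination -hB + hmp + B ^ 2 * (hk - hkc)

theorem orderOf_mk0_eq_of_pow_eq_span_one_add {p n : ℕ} (hp : p.Prime) (hp5 : 5 ≤ p)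
    (hn : Odd n) (hm : m % 4 = 2) (hmp : 1 - m = p ^ n) (hζ : ζ ^ 2 = m)
    {P : nonZeroDivisors (Ideal (𝓞 K))} (hP : (P : Ideal (𝓞 K)) ^ n = Ideal.span {1 + ζ}) :
    orderOf (ClassGroup.mk0 P) = n := by
  refine orderOf_mk0_eq_of_pow_eq_span hP ?_
  rintro s t β rfl ⟨u, hu⟩
  obtain ⟨hs, ht⟩ := Nat.odd_mul.1 hn
  have hm0 := neg_of_one_sub_eq_pow hp.one_lt hn.pos.ne' hmp
  rw [pow_mul] at hmp
  rcases (isUnit_iff_eq_one_or_eq_neg_one hm hm0 hζ).1 u.isUnit with hu1 | hu1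
  · exact eq_one_of_pow_eq_one_add hp hp5 hs.pos.ne' ht hm hmp hζ (β := β) (by simpa [hu1] using hu)
  · exact eq_one_of_pow_eq_one_add hp hp5 hs.pos.ne' ht hm hmp hζ (β := -β)
      (by simpa [hu1, ht.neg_pow] using hu)

theorem exists_pow_eq_span_one_add {p n : ℕ} (hp : p.Prime) (hn : Odd n) (hm : m % 4 = 2)
    (hmp : 1 - m = p ^ n) (hζ : ζ ^ 2 = m) :
    ∃ P Q : Ideal (𝓞 K), P ^ n = Ideal.span {1 + ζ} ∧ Q ^ n = Ideal.span {1 + -ζ} ∧ P ≠ Q ∧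
      P.IsPrime ∧ Q.IsPrime ∧ P * Q = Ideal.span {(p : 𝓞 K)} := by
  have hm0 := neg_of_one_sub_eq_pow hp.one_lt hn.pos.ne' hmp
  have hmul : (1 + ζ) * (1 + -ζ) = ((1 - m : ℤ) : 𝓞 K) := by
    push_cast
    linear_combination -hζ
  have hunit := not_isUnit_one_add hm hm0 hζ
  have hunit' := not_isUnit_one_add hm hm0 ((neg_sq ζ).trans hζ)
  have hcop := isCoprime_of_add_eq_two (by rw [Int.odd_iff]; omega) (by ring) hmul
  obtain ⟨P, Q, hP, hQ, hPQ⟩ := exists_pow_eq_span_of_isCoprime_of_mul_eq_pow (π := (p : 𝓞 K))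
    hn.pos.ne' hcop (by rw [hmul, hmp]; push_cast; rfl)
  have hrank : Module.finrank ℤ (𝓞 K) = 2 := by
    rw [RingOfIntegers.rank, Algebra.IsQuadraticExtension.finrank_eq_two]
  have hPtop := ne_top_of_pow_eq_span hP hunit
  have hQtop := ne_top_of_pow_eq_span hQ hunit'
  exact ⟨P, Q, hP, hQ, ne_of_pow_eq_span_of_isCoprime hP hQ hcop hunit,
    isPrime_of_mul_eq_span_natCast hrank hp hPtop hQtop hPQ,
    isPrime_of_mul_eq_span_natCast hrank hp hQtop hPtop (by rwa [mul_comm]), hPQ⟩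

end QuadraticNumberField

open IntermediateField in
theorem isQuadraticExtension_adjoin {F L : Type*} [Field F] [Field L] [Algebra F L] {d : F} {z : L}
    (hz : z ∉ (algebraMap F L).range) (hd : z ^ 2 = algebraMap F L d) :
    Algebra.IsQuadraticExtension F F⟮z⟯ := by
  have hroot : Polynomial.aeval z (Polynomial.X ^ 2 - Polynomial.C d) = 0 := by simp [hd]
  have hmonic := Polynomial.monic_X_pow_sub_C d two_ne_zero
  have hirr : Irreducible (Polynomial.X ^ 2 - Polynomial.C d) := by
    refine (X_pow_sub_C_irreducible_iff_of_prime Nat.prime_two).2 fun b hb => hz ?_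
    have hzb : z ^ 2 = algebraMap F L b ^ 2 := by rw [hd, ← hb, map_pow]
    rcases sq_eq_sq_iff_eq_or_eq_neg.1 hzb with rfl | rfl
    · exact ⟨b, rfl⟩
    · exact ⟨-b, map_neg _ b⟩
  refine ⟨?_⟩
  rw [adjoin.finrank ⟨_, hmonic, hroot⟩, ← minpoly.eq_of_irreducible_of_monic hirr hroot hmonic,
    Polynomial.natDegree_X_pow_sub_C]

open NumberField in
theorem stmt_7_general {p n : ℕ} (hp : p.Prime) (hmod : p % 4 = 3) (hne : p ≠ 3) (hodd : Odd n)
    {K : Type*} [Field K] [NumberField K] [Algebra.IsQuadraticExtension ℚ K] {z : K}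
    (hz : z ^ 2 = 1 - (p : K) ^ n) :
    (∃ P Q : Ideal (𝓞 K), P ≠ Q ∧ P.IsPrime ∧ Q.IsPrime ∧ P * Q = Ideal.span {(p : 𝓞 K)}) ∧
    ∀ P : Ideal (𝓞 K), P.IsPrime → (p : 𝓞 K) ∈ P → ∀ hP0 : P ≠ 0,
      orderOf (ClassGroup.mk0 ⟨P, mem_nonZeroDivisors_of_ne_zero hP0⟩) = n := by
  obtain ⟨m, hmp⟩ : ∃ m : ℤ, 1 - m = p ^ n := ⟨1 - p ^ n, by ring⟩
  have hm : m % 4 = 2 := by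
    rw [← one_sub_pow_emod_four hmod hodd, ← hmp, sub_sub_cancel]
  have hzm : z ^ 2 = algebraMap ℤ K m := by
    rw [hz, eq_intCast, ← sub_sub_cancel 1 m, hmp]
    push_cast
    rfl
  obtain ⟨ζ, rfl⟩ : ∃ ζ : 𝓞 K, (ζ : K) = z :=
    ⟨⟨z, .of_pow two_pos (hzm ▸ isIntegral_algebraMap)⟩, rfl⟩
  have hζ : ζ ^ 2 = m := RingOfIntegers.ext (by simpa using hzm)
  obtain ⟨P, Q, hP, hQ, hPQ, hPprime, hQprime, hmul⟩ := exists_pow_eq_span_one_add hp hodd hm hmp hζ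
  refine ⟨⟨P, Q, hPQ, hPprime, hQprime, hmul⟩, fun 𝔭 h𝔭 hmem h𝔭0 => ?_⟩
  have hp5 : 5 ≤ p := by omega
  rcases eq_or_eq_of_mul_eq_span (by exact_mod_cast hp.ne_zero) hPprime hQprime hmul h𝔭 hmem with
    rfl | rfl
  · exact orderOf_mk0_eq_of_pow_eq_span_one_add hp hp5 hodd hm hmp hζ hP
  · exact orderOf_mk0_eq_of_pow_eq_span_one_add hp hp5 hodd hm hmp ((neg_sq ζ).trans hζ) hQ

/-- Let `p` be a prime with `p ≡ 3 (mod 4)`, `p ≠ 3`, and let `n` be an odd integer greater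
than `1`. Then `p` splits in the imaginary quadratic field `K = ℚ(√(1 − p^n))`, and for any
prime ideal `℘` of the ring of integers of `K` lying over `p`, the order of the ideal class
of `℘` in the ideal class group of `K` is exactly `n`. -/
theorem stmt_7 (p : ℕ) (hp : p.Prime) (hmod : p % 4 = 3) (hne : p ≠ 3)
    (n : ℕ) (hn : 1 < n) (hodd : Odd n)
    (z : ℂ) (hz : z ^ 2 = 1 - (p : ℂ) ^ n)
    (K : IntermediateField ℚ ℂ) (hK : K = IntermediateField.adjoin ℚ {z})
    [NumberField K] :
    (∃ P Q : Ideal (NumberField.RingOfIntegers K), P ≠ Q ∧ P.IsPrime ∧ Q.IsPrime ∧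
        P * Q = Ideal.span {(p : NumberField.RingOfIntegers K)}) ∧
    ∀ (P : Ideal (NumberField.RingOfIntegers K)), P.IsPrime →
      (p : NumberField.RingOfIntegers K) ∈ P → ∀ (hP0 : P ≠ 0),
      orderOf (ClassGroup.mk0 ⟨P, mem_nonZeroDivisors_of_ne_zero hP0⟩) = n := by
  subst hK
  have hm := one_sub_pow_emod_four hmod hodd
  have hzm : z ^ 2 = ((1 - p ^ n : ℤ) : ℂ) := by simpa using hz
  have hquad := isQuadraticExtension_adjoin (F := ℚ) (d := ((1 - p ^ n : ℤ) : ℚ))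
    (notMem_range_of_sq_eq_intCast hm hzm) (by simpa using hz)
  -- `hquad` uses the `ℚ`-algebra structure of an intermediate field, which agrees with the one of a
  -- field of characteristic zero only after unfolding, so instance search does not find it.
  exact @stmt_7_general p n hp hmod hne hodd _ _ _ hquad (IntermediateField.AdjoinSimple.gen ℚ z)
    (Subtype.ext (by simpa using hz))
end
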